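/- arXiv:1506.00701 — 5 statements merged into one kernel-verified Lean document; each statement's English description precedes it below -/
import Mathlib

section
/- Let A be a symmetric positive definite n×n real matrix all of whose eigenvalues lie in the interval [Λmin, Λmax] (with 0 < Λmin ≤ Λmax), and let B be an m×n real matrix of full row rank m (1 ≤ m ≤ n) with smallest singular value Σ₁ and largest singular value Σ_m. Then every eigenvalue λ of the symmetric saddle-point matrix C = [[A, Bᵀ], [B, 0]] satisfies λ ∈ [ (Λmin − √(Λmin² + 4Σ_m²))/2 , (Λmax − √(Λmax² + 4Σ₁²))/2 ] ∪ [ Λmin , (Λmax + √(Λmax² + 4Σ_m²))/2 ]. -/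
open Matrix

/-!
Pairing the two block equations `A x + Bᴴ y = lam x`, `B x = lam y` with `x` and `y` yields
`⟪A x, x⟫ = lam (‖x‖² - ‖y‖²)` and `lam² ‖x‖² = lam ⟪A x, x⟫ + ‖B x‖²`. The second identity gives
the two outer endpoints, and the first one shows that `lam < Λmin` forces `y ≠ 0` and `lam ≤ 0`.
In that case `P = A - lam` satisfies `0 ≤ P ≤ Λmax - lam`, and the Cauchy–Schwarz inequality for
the form `⟪P u, v⟫` gives `‖P x‖² ≤ (Λmax - lam) ⟪P x, x⟫`. Since `P x = -Bᴴ y` and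
`⟪P x, x⟫ = -lam ‖y‖²`, this yields `σ₁² ≤ (Λmax - lam) (-lam)`, which is the remaining endpoint.
-/

open RCLike Module.End WithLp
open scoped InnerProductSpace

section QuadraticRoots

variable {t b s : ℝ}

lemma mem_Icc_quadratic_roots_of_sq_le (h : t ^ 2 ≤ t * b + s ^ 2) :
    t ∈ Set.Icc ((b - √(b ^ 2 + 4 * s ^ 2)) / 2) ((b + √(b ^ 2 + 4 * s ^ 2)) / 2) := by
  have habs : |2 * t - b| ≤ √(b ^ 2 + 4 * s ^ 2) := Real.abs_le_sqrt (by linarith)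
  obtain ⟨hneg, hpos⟩ := abs_le.mp habs
  constructor <;> linarith

lemma le_smaller_quadratic_root (htb : 2 * t ≤ b) (h : s ^ 2 ≤ (b - t) * -t) :
    t ≤ (b - √(b ^ 2 + 4 * s ^ 2)) / 2 := by
  have hsqrt : √(b ^ 2 + 4 * s ^ 2) ≤ b - 2 * t :=
    Real.sqrt_le_iff.mpr ⟨by linarith, by linarith⟩
  linarith

end QuadraticRoots

section InnerProductSpace

variable {𝕜 E F : Type*} [RCLike 𝕜]
  [NormedAddCommGroup E] [InnerProductSpace 𝕜 E] [NormedAddCommGroup F] [InnerProductSpace 𝕜 F]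

section QuadraticForm

variable {T : E →ₗ[𝕜] E}

lemma norm_inner_apply_sq_le_of_isPositive (hT : T.IsPositive) (x y : E) :
    ‖⟪T x, y⟫_𝕜‖ ^ 2 ≤ re ⟪T x, x⟫_𝕜 * re ⟪T y, y⟫_𝕜 := by
  let core : PreInnerProductSpace.Core 𝕜 E :=
    { inner := fun u v => ⟪T u, v⟫_𝕜
      conj_inner_symm := fun u v => by rw [inner_conj_symm, hT.isSymmetric u v]
      re_inner_nonneg := hT.re_inner_nonneg_left
      add_left := fun u v w => by rw [map_add, inner_add_left]
      smul_left := fun u v r => by rw [map_smul, inner_smul_left] }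
  have hsymm : ‖⟪T y, x⟫_𝕜‖ = ‖⟪T x, y⟫_𝕜‖ := by rw [hT.isSymmetric y x, norm_inner_symm]
  calc ‖⟪T x, y⟫_𝕜‖ ^ 2 = ‖⟪T x, y⟫_𝕜‖ * ‖⟪T y, x⟫_𝕜‖ := by rw [hsymm, sq]
    _ ≤ re ⟪T x, x⟫_𝕜 * re ⟪T y, y⟫_𝕜 :=
      @InnerProductSpace.Core.inner_mul_inner_self_le 𝕜 E _ _ _ core x y

lemma norm_apply_sq_le_of_isPositive (hT : T.IsPositive) {c : ℝ}
    (hc : ∀ x, re ⟪T x, x⟫_𝕜 ≤ c * ‖x‖ ^ 2) (x : E) : ‖T x‖ ^ 2 ≤ c * re ⟪T x, x⟫_𝕜 := by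
  have hx : 0 ≤ re ⟪T x, x⟫_𝕜 := hT.re_inner_nonneg_left x
  rcases eq_or_ne (T x) 0 with hTx | hTx
  · simp [hTx]
  have hpos : 0 < ‖T x‖ ^ 2 := by positivity
  refine le_of_mul_le_mul_right ?_ hpos
  calc ‖T x‖ ^ 2 * ‖T x‖ ^ 2 = ‖⟪T x, T x⟫_𝕜‖ ^ 2 := by
        rw [inner_self_eq_norm_sq_to_K, norm_pow, norm_ofReal, abs_norm]; ring
    _ ≤ re ⟪T x, x⟫_𝕜 * re ⟪T (T x), T x⟫_𝕜 := norm_inner_apply_sq_le_of_isPositive hT x (T x)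
    _ ≤ re ⟪T x, x⟫_𝕜 * (c * ‖T x‖ ^ 2) := by gcongr; exact hc (T x)
    _ = c * re ⟪T x, x⟫_𝕜 * ‖T x‖ ^ 2 := by ring

lemma re_inner_sub_smul_apply_self (c : ℝ) (x : E) :
    re ⟪(T - (c : 𝕜) • 1) x, x⟫_𝕜 = re ⟪T x, x⟫_𝕜 - c * ‖x‖ ^ 2 := by
  simp [inner_sub_left, inner_smul_left]

lemma norm_sub_smul_apply_sq_le (hT : T.IsSymmetric) {c d : ℝ}
    (hc : ∀ x, c * ‖x‖ ^ 2 ≤ re ⟪T x, x⟫_𝕜) (hd : ∀ x, re ⟪T x, x⟫_𝕜 ≤ d * ‖x‖ ^ 2) (x : E) :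
    ‖T x - (c : 𝕜) • x‖ ^ 2 ≤ (d - c) * (re ⟪T x, x⟫_𝕜 - c * ‖x‖ ^ 2) := by
  have hpos : (T - (c : 𝕜) • 1).IsPositive := by
    refine ⟨hT.sub (LinearMap.IsSymmetric.one.smul (conj_ofReal c)), fun v => ?_⟩
    rw [re_inner_sub_smul_apply_self]
    exact sub_nonneg.mpr (hc v)
  have hbound : ∀ v, re ⟪(T - (c : 𝕜) • 1) v, v⟫_𝕜 ≤ (d - c) * ‖v‖ ^ 2 := fun v => by
    rw [re_inner_sub_smul_apply_self, sub_mul]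
    exact sub_le_sub_right (hd v) _
  rw [← re_inner_sub_smul_apply_self]
  exact norm_apply_sq_le_of_isPositive hpos hbound x

lemma re_inner_apply_self_eq_sum_eigenvalues [FiniteDimensional 𝕜 E] (hT : T.IsSymmetric) (x : E) :
    re ⟪T x, x⟫_𝕜 = ∑ i, hT.eigenvalues rfl i * ‖⟪hT.eigenvectorBasis rfl i, x⟫_𝕜‖ ^ 2 := by
  rw [← (hT.eigenvectorBasis rfl).sum_inner_mul_inner, map_sum]
  refine Finset.sum_congr rfl fun i _ => ?_
  rw [hT x, hT.apply_eigenvectorBasis, inner_smul_right, mul_assoc, re_ofReal_mul,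
    inner_mul_symm_re_eq_norm, norm_mul, norm_inner_symm x, sq]

lemma re_inner_apply_self_mem_Icc_of_hasEigenvalue [FiniteDimensional 𝕜 E]
    (hT : T.IsSymmetric) {a b : ℝ}
    (hab : ∀ μ : ℝ, HasEigenvalue T (μ : 𝕜) → μ ∈ Set.Icc a b) (x : E) :
    re ⟪T x, x⟫_𝕜 ∈ Set.Icc (a * ‖x‖ ^ 2) (b * ‖x‖ ^ 2) := by
  have hμ i : hT.eigenvalues rfl i ∈ Set.Icc a b := hab _ (hT.hasEigenvalue_eigenvalues rfl i)
  rw [re_inner_apply_self_eq_sum_eigenvalues hT,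
    ← (hT.eigenvectorBasis rfl).sum_sq_norm_inner_right x, Finset.mul_sum, Finset.mul_sum]
  constructor <;> gcongr with i
  exacts [(hμ i).1, (hμ i).2]

end QuadraticForm

/-- `(x, y)` solves the eigenvalue equation, with eigenvalue `c`, of the saddle-point operator
`[[T, S'], [S, 0]]` on `E × F`, where `S'` plays the role of the adjoint of `S`. Neither the
adjoint relation between `S` and `S'` nor `(x, y) ≠ 0` is part of the structure. -/
structure IsSaddlePointEigenpair (T : E →ₗ[𝕜] E) (S : E →ₗ[𝕜] F) (S' : F →ₗ[𝕜] E) (c : ℝ)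
    (x : E) (y : F) : Prop where
  fst_eq : T x + S' y = (c : 𝕜) • x
  snd_eq : S x = (c : 𝕜) • y

namespace IsSaddlePointEigenpair

variable {T : E →ₗ[𝕜] E} {S : E →ₗ[𝕜] F} {S' : F →ₗ[𝕜] E} {c a b s : ℝ} {x : E} {y : F}

lemma re_inner_apply_self (h : IsSaddlePointEigenpair T S S' c x y)
    (hS : ∀ u v, ⟪S u, v⟫_𝕜 = ⟪u, S' v⟫_𝕜) :
    re ⟪T x, x⟫_𝕜 = c * (‖x‖ ^ 2 - ‖y‖ ^ 2) := by
  have hcoupling : re ⟪S' y, x⟫_𝕜 = c * ‖y‖ ^ 2 := by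
    rw [inner_re_symm, ← hS, h.snd_eq, inner_smul_left, conj_ofReal, re_ofReal_mul,
      inner_self_eq_norm_sq]
  rw [eq_sub_of_add_eq h.fst_eq, inner_sub_left, map_sub, hcoupling, inner_smul_left, conj_ofReal,
    re_ofReal_mul, inner_self_eq_norm_sq]
  ring

lemma sq_mul_norm_sq (h : IsSaddlePointEigenpair T S S' c x y)
    (hS : ∀ u v, ⟪S u, v⟫_𝕜 = ⟪u, S' v⟫_𝕜) :
    c ^ 2 * ‖x‖ ^ 2 = c * re ⟪T x, x⟫_𝕜 + ‖S x‖ ^ 2 := by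
  rw [h.re_inner_apply_self hS, h.snd_eq, norm_smul, norm_ofReal, mul_pow, sq_abs]
  ring

lemma sq_le_mul_add_sq (h : IsSaddlePointEigenpair T S S' c x y)
    (hS : ∀ u v, ⟪S u, v⟫_𝕜 = ⟪u, S' v⟫_𝕜) (hxy : x ≠ 0 ∨ y ≠ 0)
    (hT : c * re ⟪T x, x⟫_𝕜 ≤ c * (a * ‖x‖ ^ 2)) (hs : ‖S x‖ ^ 2 ≤ s ^ 2 * ‖x‖ ^ 2) :
    c ^ 2 ≤ c * a + s ^ 2 := by
  rcases eq_or_ne x 0 with rfl | hx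
  · have hy : y ≠ 0 := hxy.resolve_left (not_not_intro rfl)
    have hcy : (c : 𝕜) • y = 0 := by rw [← h.snd_eq, map_zero]
    have hc : c = 0 := ofReal_eq_zero.mp ((smul_eq_zero.mp hcy).resolve_right hy)
    simp [hc, sq_nonneg]
  · have hpos : 0 < ‖x‖ ^ 2 := by positivity
    refine le_of_mul_le_mul_right ?_ hpos
    linarith [h.sq_mul_norm_sq hS]

lemma snd_ne_zero_and_nonpos (h : IsSaddlePointEigenpair T S S' c x y)
    (hS : ∀ u v, ⟪S u, v⟫_𝕜 = ⟪u, S' v⟫_𝕜) (hxy : x ≠ 0 ∨ y ≠ 0)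
    (hT : a * ‖x‖ ^ 2 ≤ re ⟪T x, x⟫_𝕜) (hc : c < a) : y ≠ 0 ∧ c ≤ 0 := by
  have henergy : (a - c) * ‖x‖ ^ 2 ≤ -c * ‖y‖ ^ 2 := by linarith [h.re_inner_apply_self hS]
  have hy : y ≠ 0 := by
    rintro rfl
    have hx : x ≠ 0 := hxy.resolve_right (not_not_intro rfl)
    have hpos : 0 < (a - c) * ‖x‖ ^ 2 := mul_pos (sub_pos.mpr hc) (by positivity)
    simp only [norm_zero] at henergy
    linarith
  have hnonneg : 0 ≤ -c * ‖y‖ ^ 2 :=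
    (mul_nonneg (sub_nonneg.mpr hc.le) (sq_nonneg _)).trans henergy
  exact ⟨hy, neg_nonneg.mp (nonneg_of_mul_nonneg_left hnonneg (by positivity))⟩

lemma norm_adjoint_sq_le (h : IsSaddlePointEigenpair T S S' c x y)
    (hS : ∀ u v, ⟪S u, v⟫_𝕜 = ⟪u, S' v⟫_𝕜) (hT : T.IsSymmetric)
    (hc : ∀ u, c * ‖u‖ ^ 2 ≤ re ⟪T u, u⟫_𝕜) (hb : ∀ u, re ⟪T u, u⟫_𝕜 ≤ b * ‖u‖ ^ 2) :
    ‖S' y‖ ^ 2 ≤ (b - c) * -c * ‖y‖ ^ 2 := by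
  have hres : T x - (c : 𝕜) • x = -S' y := by rw [← h.fst_eq]; abel
  calc ‖S' y‖ ^ 2 = ‖T x - (c : 𝕜) • x‖ ^ 2 := by rw [hres, norm_neg]
    _ ≤ (b - c) * (re ⟪T x, x⟫_𝕜 - c * ‖x‖ ^ 2) := norm_sub_smul_apply_sq_le hT hc hb x
    _ = (b - c) * -c * ‖y‖ ^ 2 := by rw [h.re_inner_apply_self hS]; ring

theorem mem_Icc_union_Icc {s₁ s₂ : ℝ} (h : IsSaddlePointEigenpair T S S' c x y)
    (hS : ∀ u v, ⟪S u, v⟫_𝕜 = ⟪u, S' v⟫_𝕜) (hxy : x ≠ 0 ∨ y ≠ 0) (hT : T.IsSymmetric) (hab : a ≤ b)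
    (hTab : ∀ u, re ⟪T u, u⟫_𝕜 ∈ Set.Icc (a * ‖u‖ ^ 2) (b * ‖u‖ ^ 2))
    (hs₁ : ∀ v, s₁ ^ 2 * ‖v‖ ^ 2 ≤ ‖S' v‖ ^ 2) (hs₂ : ∀ u, ‖S u‖ ^ 2 ≤ s₂ ^ 2 * ‖u‖ ^ 2) :
    c ∈ Set.Icc ((a - √(a ^ 2 + 4 * s₂ ^ 2)) / 2) ((b - √(b ^ 2 + 4 * s₁ ^ 2)) / 2) ∪
      Set.Icc a ((b + √(b ^ 2 + 4 * s₂ ^ 2)) / 2) := by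
  rcases lt_or_ge c a with hca | hac
  · left
    obtain ⟨hy, hc⟩ := h.snd_ne_zero_and_nonpos hS hxy (hTab x).1 hca
    have houter : c ^ 2 ≤ c * a + s₂ ^ 2 :=
      h.sq_le_mul_add_sq hS hxy (mul_le_mul_of_nonpos_left (hTab x).1 hc) (hs₂ x)
    have hadj : ‖S' y‖ ^ 2 ≤ (b - c) * -c * ‖y‖ ^ 2 :=
      h.norm_adjoint_sq_le hS hT
        (fun u => (mul_le_mul_of_nonneg_right hca.le (sq_nonneg _)).trans (hTab u).1)
        fun u => (hTab u).2
    have hinner : s₁ ^ 2 ≤ (b - c) * -c :=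
      le_of_mul_le_mul_right ((hs₁ y).trans hadj) (by positivity)
    exact ⟨(mem_Icc_quadratic_roots_of_sq_le houter).1,
      le_smaller_quadratic_root (by linarith) hinner⟩
  · refine Or.inr ⟨hac, ?_⟩
    rcases le_total c 0 with hc | hc
    · have hzero : (0 : ℝ) ^ 2 ≤ 0 * b + s₂ ^ 2 := by simp [sq_nonneg]
      exact hc.trans (mem_Icc_quadratic_roots_of_sq_le hzero).2
    · exact (mem_Icc_quadratic_roots_of_sq_le (h.sq_le_mul_add_sq hS hxy
        (mul_le_mul_of_nonneg_left (hTab x).2 hc) (hs₂ x))).2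

end IsSaddlePointEigenpair

end InnerProductSpace

section Matrix

variable {𝕜 ι κ : Type*} [RCLike 𝕜] [Fintype ι] [Fintype κ]

lemma isSaddlePointEigenpair_of_fromBlocks_mulVec [DecidableEq ι] [DecidableEq κ]
    {A : Matrix ι ι 𝕜} {B : Matrix κ ι 𝕜} {c : ℝ} {z : ι ⊕ κ → 𝕜}
    (hz : fromBlocks A Bᴴ B 0 *ᵥ z = (c : 𝕜) • z) :
    IsSaddlePointEigenpair (toEuclideanLin A) (toEuclideanLin B) (toEuclideanLin Bᴴ) c
      (toLp 2 (z ∘ Sum.inl)) (toLp 2 (z ∘ Sum.inr)) := by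
  rw [fromBlocks_mulVec] at hz
  constructor <;> ext i
  · simpa [real_smul_eq_coe_mul] using congrFun hz (Sum.inl i)
  · simpa [real_smul_eq_coe_mul] using congrFun hz (Sum.inr i)

lemma norm_toLp_sq_eq_dotProduct (v : ι → ℝ) : ‖toLp 2 v‖ ^ 2 = v ⬝ᵥ v := by
  rw [EuclideanSpace.real_norm_sq_eq]
  exact Finset.sum_congr rfl fun i _ => sq (v i)

theorem stmt0_general {A : Matrix ι ι 𝕜} {B : Matrix κ ι 𝕜} {Λmin Λmax σ₁ σm : ℝ}
    (hA : A.IsHermitian) (hΛ : Λmin ≤ Λmax)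
    (hA_eig : ∀ (μ : ℝ) (x : ι → 𝕜), x ≠ 0 → A *ᵥ x = (μ : 𝕜) • x → μ ∈ Set.Icc Λmin Λmax)
    (hBlow : ∀ y : κ → 𝕜, σ₁ ^ 2 * ‖toLp 2 y‖ ^ 2 ≤ ‖toLp 2 (Bᴴ *ᵥ y)‖ ^ 2)
    (hBup : ∀ x : ι → 𝕜, ‖toLp 2 (B *ᵥ x)‖ ^ 2 ≤ σm ^ 2 * ‖toLp 2 x‖ ^ 2)
    {lam : ℝ} {z : ι ⊕ κ → 𝕜} (hz : z ≠ 0)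
    (hev : fromBlocks A Bᴴ B 0 *ᵥ z = (lam : 𝕜) • z) :
    lam ∈ Set.Icc ((Λmin - √(Λmin ^ 2 + 4 * σm ^ 2)) / 2)
        ((Λmax - √(Λmax ^ 2 + 4 * σ₁ ^ 2)) / 2) ∪
      Set.Icc Λmin ((Λmax + √(Λmax ^ 2 + 4 * σm ^ 2)) / 2) := by
  classical
  have hT : (toEuclideanLin A).IsSymmetric := isSymmetric_toEuclideanLin_iff.mpr hA
  have hblocks : toLp 2 (z ∘ Sum.inl) ≠ 0 ∨ toLp 2 (z ∘ Sum.inr) ≠ 0 := by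
    contrapose! hz
    ext (i | j)
    exacts [congrFun (congrArg ofLp hz.1) i, congrFun (congrArg ofLp hz.2) j]
  have hT_eig (μ : ℝ) (hμ : HasEigenvalue (toEuclideanLin A) (μ : 𝕜)) : μ ∈ Set.Icc Λmin Λmax := by
    obtain ⟨v, hv⟩ := hμ.exists_hasEigenvector
    exact hA_eig μ (ofLp v) (by simpa using hv.2) (congrArg ofLp hv.apply_eq_smul)
  refine (isSaddlePointEigenpair_of_fromBlocks_mulVec hev).mem_Icc_union_Icc ?_ hblocks hT hΛ
    (re_inner_apply_self_mem_Icc_of_hasEigenvalue hT hT_eig)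
    (fun y => hBlow (ofLp y)) (fun x => hBup (ofLp x))
  intro u v
  rw [toEuclideanLin_conjTranspose_eq_adjoint, LinearMap.adjoint_inner_right]

end Matrix

/-- Rusten–Winther spectral inclusion for the saddle-point matrix
`C = [[A, Bᵀ], [B, 0]]`: if the symmetric positive definite matrix `A` has all its
eigenvalues in `[Λmin, Λmax]` and `B` has full row rank with smallest singular value
`σ₁` and largest singular value `σm`, then every eigenvalue `lam` of `C` lies in
`[(Λmin - √(Λmin² + 4σm²))/2, (Λmax - √(Λmax² + 4σ₁²))/2] ∪ [Λmin, (Λmax + √(Λmax² + 4σm²))/2]`. -/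
theorem stmt0 {n m : ℕ} (hm : 1 ≤ m) (hmn : m ≤ n)
    (A : Matrix (Fin n) (Fin n) ℝ) (B : Matrix (Fin m) (Fin n) ℝ)
    (Λmin Λmax σ₁ σm : ℝ)
    (hA_symm : A.IsSymm) (hA_pd : A.PosDef)
    (hΛpos : 0 < Λmin) (hΛle : Λmin ≤ Λmax)
    (hA_eig : ∀ (μ : ℝ) (x : Fin n → ℝ), x ≠ 0 → A.mulVec x = μ • x →
      μ ∈ Set.Icc Λmin Λmax)
    (hrank : B.rank = m)
    (hσ₁pos : 0 < σ₁) (hσle : σ₁ ≤ σm)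
    -- `σ₁` is the smallest singular value of `B`:
    (hBlow : ∀ y : Fin m → ℝ, σ₁ ^ 2 * (y ⬝ᵥ y) ≤ (Bᵀ.mulVec y) ⬝ᵥ (Bᵀ.mulVec y))
    -- `σm` is the largest singular value of `B`:
    (hBup : ∀ x : Fin n → ℝ, (B.mulVec x) ⬝ᵥ (B.mulVec x) ≤ σm ^ 2 * (x ⬝ᵥ x))
    (C : Matrix (Fin n ⊕ Fin m) (Fin n ⊕ Fin m) ℝ)
    (hC : C = Matrix.fromBlocks A Bᵀ B 0)
    (lam : ℝ) (z : Fin n ⊕ Fin m → ℝ) (hz : z ≠ 0) (hev : C.mulVec z = lam • z) :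
    lam ∈ Set.Icc ((Λmin - Real.sqrt (Λmin ^ 2 + 4 * σm ^ 2)) / 2)
        ((Λmax - Real.sqrt (Λmax ^ 2 + 4 * σ₁ ^ 2)) / 2) ∪
      Set.Icc Λmin ((Λmax + Real.sqrt (Λmax ^ 2 + 4 * σm ^ 2)) / 2) := by
  subst hC
  exact stmt0_general hA_pd.isHermitian hΛle hA_eig
    (by simpa only [norm_toLp_sq_eq_dotProduct, conjTranspose_eq_transpose_of_trivial] using hBlow)
    (by simpa only [norm_toLp_sq_eq_dotProduct] using hBup) hz hev
end

section
/- Let A be a symmetric n×n real matrix satisfying xᵀAx ≥ Λmin·‖x‖² for all x ∈ ℝⁿ, where Λmin > 0, and let B be any m×n real matrix. Then every positive eigenvalue λ of the saddle-point matrix C = [[A, Bᵀ], [B, 0]] satisfies λ ≥ Λmin. -/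
open Matrix

/-!
Pair the eigenvalue equation for `z = (x, y)` with `(x, -y)` rather than with `z`. The contributions
of `B` and `Bᵀ` then cancel, leaving `xᵀ A x - yᵀ D y = lam * (xᵀ x - yᵀ y)` for a lower right block
`D`. If `yᵀ D y ≤ 0` for all `y` and `xᵀ A x ≥ c * xᵀ x` for all `x`, the terms in `y` can be
discarded and `c * xᵀ x ≤ lam * xᵀ x`. Here `x ≠ 0`: an eigenvector `(0, y)` would make `lam > 0` an
eigenvalue of `D`, whose eigenvalues are nonpositive.
-/

section SaddlePoint

variable {ι κ R : Type*} [Fintype ι] [Fintype κ]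

theorem dotProduct_self_nonneg [Ring R] [LinearOrder R] [IsStrictOrderedRing R] (x : ι → R) :
    0 ≤ x ⬝ᵥ x :=
  Finset.sum_nonneg fun i _ => mul_self_nonneg (x i)

variable [CommRing R]

theorem dotProduct_elim_neg_fromBlocks_transpose_mulVec (A : Matrix ι ι R) (B : Matrix κ ι R)
    (D : Matrix κ κ R) (x : ι → R) (y : κ → R) :
    Sum.elim x (-y) ⬝ᵥ fromBlocks A Bᵀ B D *ᵥ Sum.elim x y = x ⬝ᵥ A *ᵥ x - y ⬝ᵥ D *ᵥ y := by
  have cross_terms : x ⬝ᵥ Bᵀ *ᵥ y = y ⬝ᵥ B *ᵥ x := by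
    rw [mulVec_transpose, dotProduct_comm, ← dotProduct_mulVec]
  simp only [fromBlocks_mulVec, Sum.elim_comp_inl, Sum.elim_comp_inr, sumElim_dotProduct_sumElim,
    dotProduct_add, neg_dotProduct, cross_terms]
  ring

variable [LinearOrder R] [IsStrictOrderedRing R]

theorem eq_zero_of_mulVec_eq_smul_of_dotProduct_nonpos {D : Matrix κ κ R} {lam : R} {y : κ → R}
    (hD : y ⬝ᵥ D *ᵥ y ≤ 0) (hlam : 0 < lam) (hy : D *ᵥ y = lam • y) : y = 0 := by
  have hle : lam * (y ⬝ᵥ y) ≤ 0 := by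
    rwa [hy, dotProduct_smul, smul_eq_mul] at hD
  exact dotProduct_self_eq_zero.mp
    ((nonpos_of_mul_nonpos_right hle hlam).antisymm (dotProduct_self_nonneg y))

theorem ne_zero_of_fromBlocks_mulVec_elim_eq_smul {A : Matrix ι ι R} {B : Matrix ι κ R}
    {C : Matrix κ ι R} {D : Matrix κ κ R} {lam : R} {x : ι → R} {y : κ → R}
    (hD : y ⬝ᵥ D *ᵥ y ≤ 0) (hlam : 0 < lam) (hxy : Sum.elim x y ≠ 0)
    (hev : fromBlocks A B C D *ᵥ Sum.elim x y = lam • Sum.elim x y) : x ≠ 0 := by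
  rintro rfl
  have hDy : D *ᵥ y = lam • y := by
    funext i
    simpa [fromBlocks_mulVec] using congrFun hev (Sum.inr i)
  have hy : y = 0 := eq_zero_of_mulVec_eq_smul_of_dotProduct_nonpos hD hlam hDy
  exact hxy (by rw [hy, Sum.elim_zero_zero])

theorem stmt1_general {A : Matrix ι ι R} (B : Matrix κ ι R) {D : Matrix κ κ R} {c : R}
    (hA : ∀ x, c * (x ⬝ᵥ x) ≤ x ⬝ᵥ A *ᵥ x) (hD : ∀ y, y ⬝ᵥ D *ᵥ y ≤ 0)
    {lam : R} (hlam : 0 < lam) {z : ι ⊕ κ → R} (hz : z ≠ 0)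
    (hev : fromBlocks A Bᵀ B D *ᵥ z = lam • z) : c ≤ lam := by
  obtain ⟨x, y, rfl⟩ : ∃ x y, z = Sum.elim x y :=
    ⟨z ∘ Sum.inl, z ∘ Sum.inr, (Sum.elim_comp_inl_inr z).symm⟩
  have hx : x ≠ 0 := ne_zero_of_fromBlocks_mulVec_elim_eq_smul (hD y) hlam hz hev
  have hxx : 0 < x ⬝ᵥ x :=
    (dotProduct_self_nonneg x).lt_of_ne' (dotProduct_self_eq_zero.not.mpr hx)
  have energy : x ⬝ᵥ A *ᵥ x - y ⬝ᵥ D *ᵥ y = lam * (x ⬝ᵥ x - y ⬝ᵥ y) := by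
    rw [← dotProduct_elim_neg_fromBlocks_transpose_mulVec A B D, hev, dotProduct_smul,
      sumElim_dotProduct_sumElim, neg_dotProduct, smul_eq_mul, sub_eq_add_neg]
  have hyy : 0 ≤ lam * (y ⬝ᵥ y) := mul_nonneg hlam.le (dotProduct_self_nonneg y)
  refine le_of_mul_le_mul_right ?_ hxx
  calc c * (x ⬝ᵥ x) ≤ x ⬝ᵥ A *ᵥ x := hA x
    _ = lam * (x ⬝ᵥ x) - lam * (y ⬝ᵥ y) + y ⬝ᵥ D *ᵥ y := by linear_combination energy
    _ ≤ lam * (x ⬝ᵥ x) := by linarith [hD y]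

end SaddlePoint

/-- Lower bound for the positive eigenvalues of the saddle-point matrix
`C = [[A, Bᵀ], [B, 0]]`: if the symmetric matrix `A` satisfies
`xᵀ A x ≥ Λmin ‖x‖²` with `Λmin > 0`, then every positive eigenvalue `lam` of `C`
satisfies `lam ≥ Λmin`. -/
theorem stmt1 {n m : ℕ} (A : Matrix (Fin n) (Fin n) ℝ) (B : Matrix (Fin m) (Fin n) ℝ)
    (Λmin : ℝ) (hΛpos : 0 < Λmin) (hA_symm : A.IsSymm)
    (hA : ∀ x : Fin n → ℝ, Λmin * (x ⬝ᵥ x) ≤ x ⬝ᵥ A.mulVec x)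
    (lam : ℝ) (hlam : 0 < lam) (z : Fin n ⊕ Fin m → ℝ) (hz : z ≠ 0)
    (hev : (Matrix.fromBlocks A Bᵀ B 0).mulVec z = lam • z) :
    Λmin ≤ lam :=
  stmt1_general B hA (by simp) hlam hz hev
end

section
/- Let A be a symmetric n×n real matrix satisfying xᵀAx ≥ Λmin·‖x‖² for all x ∈ ℝⁿ (Λmin ∈ ℝ), and let B be an m×n real matrix satisfying ‖Bx‖ ≤ Σ·‖x‖ for all x ∈ ℝⁿ (with Σ ≥ 0). Then every negative eigenvalue λ of the saddle-point matrix C = [[A, Bᵀ], [B, 0]] satisfies λ ≥ (Λmin − √(Λmin² + 4Σ²))/2. -/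
open Matrix

/-!
Write an eigenvector for `lam` as `(x, y)`, so that `A x + Bᴴ y = lam x` and `B x = lam y`.
Pairing the first equation with `lam x` and eliminating `y` through the second gives
`lam² ‖x‖² = lam ⟨x, A x⟩ + ‖B x‖²`. For `lam < 0` the right-hand side is at most
`(Λmin lam + σ²) ‖x‖²`, and `x ≠ 0`, so `lam` lies between the roots of
`t² - Λmin t - σ²`. The smaller root is nonpositive, so it also bounds every `lam ≥ 0`.
-/

section SaddlePointMatrix

variable {m n R : Type*}

/-- The saddle-point matrix of the block system `A x + Bᴴ y = f`, `B x = g`. The upper right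
block is the conjugate transpose, which is `Bᵀ` over `ℝ`. -/
def saddlePointMatrix [Zero R] [Star R] (A : Matrix n n R) (B : Matrix m n R) :
    Matrix (n ⊕ m) (n ⊕ m) R :=
  fromBlocks A Bᴴ B 0

variable [Fintype m] [Fintype n] {A : Matrix n n R} {B : Matrix m n R} {μ : R}
  {x : n → R} {y : m → R}

theorem saddlePointMatrix_mulVec_eq_smul_iff [NonUnitalNonAssocSemiring R] [Star R] :
    saddlePointMatrix A B *ᵥ Sum.elim x y = μ • Sum.elim x y ↔
      A *ᵥ x + Bᴴ *ᵥ y = μ • x ∧ B *ᵥ x = μ • y := by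
  have hsmul : μ • Sum.elim x y = Sum.elim (μ • x) (μ • y) := Sum.comp_elim (μ • ·) x y
  rw [saddlePointMatrix, fromBlocks_mulVec, hsmul, Sum.elim_eq_iff, Sum.elim_comp_inl,
    Sum.elim_comp_inr, zero_mulVec, add_zero]

theorem left_ne_zero_of_saddlePointMatrix_mulVec_eq_smul
    [NonUnitalNonAssocSemiring R] [NoZeroDivisors R] [Star R]
    (h : saddlePointMatrix A B *ᵥ Sum.elim x y = μ • Sum.elim x y) (hμ : μ ≠ 0)
    (hxy : Sum.elim x y ≠ 0) : x ≠ 0 := by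
  rintro rfl
  obtain ⟨-, hB⟩ := saddlePointMatrix_mulVec_eq_smul_iff.mp h
  have hy : y = 0 := funext fun j ↦
    (mul_eq_zero.mp (congrFun (hB.symm.trans (mulVec_zero B)) j)).resolve_left hμ
  exact hxy (by rw [hy, Sum.elim_zero_zero])

theorem sq_mul_star_dotProduct_self_of_saddlePointMatrix_mulVec_eq_smul
    [CommSemiring R] [StarRing R]
    (h : saddlePointMatrix A B *ᵥ Sum.elim x y = μ • Sum.elim x y) :
    μ ^ 2 * (star x ⬝ᵥ x) = μ * (star x ⬝ᵥ A *ᵥ x) + star (B *ᵥ x) ⬝ᵥ B *ᵥ x := by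
  obtain ⟨hA, hB⟩ := saddlePointMatrix_mulVec_eq_smul_iff.mp h
  have hadj : star x ⬝ᵥ Bᴴ *ᵥ y = star (B *ᵥ x) ⬝ᵥ y := by
    rw [dotProduct_mulVec, star_mulVec]
  calc μ ^ 2 * (star x ⬝ᵥ x)
      = μ * (star x ⬝ᵥ μ • x) := by rw [dotProduct_smul, smul_eq_mul, sq, mul_assoc]
    _ = μ * (star x ⬝ᵥ A *ᵥ x) + star (B *ᵥ x) ⬝ᵥ μ • y := by
        rw [← hA, dotProduct_add, hadj, mul_add, dotProduct_smul, smul_eq_mul]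
    _ = μ * (star x ⬝ᵥ A *ᵥ x) + star (B *ᵥ x) ⬝ᵥ B *ᵥ x := by rw [hB]

end SaddlePointMatrix

theorem sub_sqrt_div_two_le_of_sq_le {a b t : ℝ} (h : t ^ 2 ≤ a * t + b) :
    (a - √(a ^ 2 + 4 * b)) / 2 ≤ t := by
  have habs : |a - 2 * t| ≤ √(a ^ 2 + 4 * b) := Real.abs_le_sqrt (by linarith)
  linarith [le_of_abs_le habs]

section RCLike

open RCLike
open scoped ComplexOrder

variable {𝕜 m n : Type*} [RCLike 𝕜] [Fintype m] [Fintype n] {A : Matrix n n 𝕜}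
  {B : Matrix m n 𝕜} {Λmin σ lam : ℝ}

theorem sq_le_of_saddlePointMatrix_mulVec_eq_smul_of_neg
    (hA : ∀ x : n → 𝕜, Λmin * re (star x ⬝ᵥ x) ≤ re (star x ⬝ᵥ A *ᵥ x))
    (hB : ∀ x : n → 𝕜, re (star (B *ᵥ x) ⬝ᵥ B *ᵥ x) ≤ σ ^ 2 * re (star x ⬝ᵥ x))
    (hlam : lam < 0) {z : n ⊕ m → 𝕜} (hz : z ≠ 0)
    (hev : saddlePointMatrix A B *ᵥ z = (lam : 𝕜) • z) :
    lam ^ 2 ≤ Λmin * lam + σ ^ 2 := by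
  obtain ⟨x, y, rfl⟩ : ∃ x y, z = Sum.elim x y := ⟨_, _, (Sum.elim_comp_inl_inr z).symm⟩
  have hx : x ≠ 0 :=
    left_ne_zero_of_saddlePointMatrix_mulVec_eq_smul hev (ofReal_ne_zero.mpr hlam.ne) hz
  have hpos : 0 < re (star x ⬝ᵥ x) := (pos_iff.mp (dotProduct_star_self_pos_iff.mpr hx)).1
  have hquad : lam ^ 2 * re (star x ⬝ᵥ x) =
      lam * re (star x ⬝ᵥ A *ᵥ x) + re (star (B *ᵥ x) ⬝ᵥ B *ᵥ x) := by
    simpa only [← ofReal_pow, map_add, re_ofReal_mul] using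
      congrArg re (sq_mul_star_dotProduct_self_of_saddlePointMatrix_mulVec_eq_smul hev)
  refine le_of_mul_le_mul_right ?_ hpos
  calc lam ^ 2 * re (star x ⬝ᵥ x)
      = lam * re (star x ⬝ᵥ A *ᵥ x) + re (star (B *ᵥ x) ⬝ᵥ B *ᵥ x) := hquad
    _ ≤ lam * (Λmin * re (star x ⬝ᵥ x)) + σ ^ 2 * re (star x ⬝ᵥ x) :=
        add_le_add (mul_le_mul_of_nonpos_left (hA x) hlam.le) (hB x)
    _ = (Λmin * lam + σ ^ 2) * re (star x ⬝ᵥ x) := by ring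

theorem stmt3_general
    (hA : ∀ x : n → 𝕜, Λmin * re (star x ⬝ᵥ x) ≤ re (star x ⬝ᵥ A *ᵥ x))
    (hB : ∀ x : n → 𝕜, re (star (B *ᵥ x) ⬝ᵥ B *ᵥ x) ≤ σ ^ 2 * re (star x ⬝ᵥ x))
    {z : n ⊕ m → 𝕜} (hz : z ≠ 0) (hev : saddlePointMatrix A B *ᵥ z = (lam : 𝕜) • z) :
    (Λmin - √(Λmin ^ 2 + 4 * σ ^ 2)) / 2 ≤ lam := by
  rcases lt_or_ge lam 0 with hneg | hnonneg
  · exact sub_sqrt_div_two_le_of_sq_le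
      (sq_le_of_saddlePointMatrix_mulVec_eq_smul_of_neg hA hB hneg hz hev)
  · have hroot : (Λmin - √(Λmin ^ 2 + 4 * σ ^ 2)) / 2 ≤ 0 :=
      sub_sqrt_div_two_le_of_sq_le (by simpa using sq_nonneg σ)
    exact hroot.trans hnonneg

end RCLike

/-- Lower bound for the negative eigenvalues of the saddle-point matrix
`C = [[A, Bᵀ], [B, 0]]`: if the symmetric matrix `A` satisfies
`xᵀ A x ≥ Λmin ‖x‖²` and `‖B x‖ ≤ σ ‖x‖` for all `x`, then every negative
eigenvalue `lam` of `C` satisfies `lam ≥ (Λmin − √(Λmin² + 4σ²))/2`. -/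
theorem stmt3 {n m : ℕ} (A : Matrix (Fin n) (Fin n) ℝ) (B : Matrix (Fin m) (Fin n) ℝ)
    (Λmin σ : ℝ) (hσ : 0 ≤ σ) (hA_symm : A.IsSymm)
    (hA : ∀ x : Fin n → ℝ, Λmin * (x ⬝ᵥ x) ≤ x ⬝ᵥ A.mulVec x)
    (hB : ∀ x : Fin n → ℝ, (B.mulVec x) ⬝ᵥ (B.mulVec x) ≤ σ ^ 2 * (x ⬝ᵥ x))
    (lam : ℝ) (hlam : lam < 0) (z : Fin n ⊕ Fin m → ℝ) (hz : z ≠ 0)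
    (hev : (Matrix.fromBlocks A Bᵀ B 0).mulVec z = lam • z) :
    (Λmin - Real.sqrt (Λmin ^ 2 + 4 * σ ^ 2)) / 2 ≤ lam := by
  -- `star` and `RCLike.re` on `ℝ` reduce to the identity by unfolding, so no rewriting is needed.
  exact stmt3_general (𝕜 := ℝ) hA hB hz hev
end

section
/- Let n ≥ 1, let a = t₀ < t₁ < … < t_n = b be a partition of the interval [a, b], let y₀, …, y_n ∈ ℝ, and let v : [a, b] → ℝ be the continuous piecewise affine function with v(t_j) = y_j for all j that is affine on each subinterval [t_{j-1}, t_j]. Define the patch widths ω₀ := t₁ − t₀, ω_n := t_n − t_{n-1}, and ω_j := t_{j+1} − t_{j-1} for 0 < j < n. Then (1/6) · Σ_{j=0}^{n} y_j² ω_j ≤ ∫_a^b v(t)² dt ≤ (1/2) · Σ_{j=0}^{n} y_j² ω_j. -/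
open scoped BigOperators

/-!
If `v` runs affinely from `p` to `q` over an interval of length `h`, then
`∫ ‖v‖² = h / 6 * (‖p‖² + ‖q‖² + ‖p + q‖²)`. Discarding the last square gives the constant `1 / 6`,
and `‖p + q‖² ≤ 2 * (‖p‖² + ‖q‖²)` gives `1 / 2`. Summing over the subintervals, each nodal value
picks up the lengths of the subintervals adjacent to it, which is its patch width.
-/

open MeasureTheory Set
open AffineMap (lineMap)
open scoped RealInnerProductSpace

theorem sum_mul_patchWidth {R : Type*} [Ring R] {n : ℕ} (hn : 1 ≤ n) {t ω : ℕ → R}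
    (hω0 : ω 0 = t 1 - t 0) (hωn : ω n = t n - t (n - 1))
    (hωj : ∀ j, 0 < j → j < n → ω j = t (j + 1) - t (j - 1)) (f : ℕ → R) :
    ∑ j ∈ Finset.range (n + 1), f j * ω j =
      ∑ j ∈ Finset.range n, (f j + f (j + 1)) * (t (j + 1) - t j) := by
  obtain ⟨m, rfl⟩ := Nat.exists_eq_add_of_le' hn
  have interior : ∀ j ∈ Finset.range m,
      f (j + 1) * ω (j + 1) =
        f (j + 1) * (t (j + 2) - t (j + 1)) + f (j + 1) * (t (j + 1) - t j) := by
    intro j hj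
    rw [hωj (j + 1) j.succ_pos (by simpa using hj), ← mul_add, sub_add_sub_cancel,
      Nat.add_sub_cancel]
  simp only [add_mul, Finset.sum_add_distrib]
  rw [Finset.sum_range_succ, Finset.sum_range_succ', Finset.sum_congr rfl interior,
    Finset.sum_add_distrib, hω0, hωn, Nat.add_sub_cancel,
    Finset.sum_range_succ' (fun j => f j * (t (j + 1) - t j)),
    Finset.sum_range_succ (fun j => f (j + 1) * (t (j + 1) - t j))]
  abel

section Element

variable {E : Type*} [NormedAddCommGroup E] [InnerProductSpace ℝ E] {a b : ℝ}

theorem norm_sq_lineMap (p q : E) (x : ℝ) :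
    ‖lineMap p q x‖ ^ 2 = ‖p‖ ^ 2 + x * (2 * ⟪p, q - p⟫) + x ^ 2 * ‖q - p‖ ^ 2 := by
  rw [AffineMap.lineMap_apply_module', add_comm, norm_add_sq_real, real_inner_smul_right,
    norm_smul, mul_pow, Real.norm_eq_abs, sq_abs]
  ring

theorem integral_norm_sq_lineMap_unit (p q : E) :
    ∫ x in (0 : ℝ)..1, ‖lineMap p q x‖ ^ 2 = (‖p‖ ^ 2 + ‖q‖ ^ 2 + ‖p + q‖ ^ 2) / 6 := by
  have integral_quadratic (A B C : ℝ) :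
      ∫ x in (0 : ℝ)..1, (A + x * B + x ^ 2 * C) = A + B / 2 + C / 3 := by
    rw [intervalIntegral.integral_add (Continuous.intervalIntegrable (by fun_prop) _ _)
        (Continuous.intervalIntegrable (by fun_prop) _ _),
      intervalIntegral.integral_add (Continuous.intervalIntegrable (by fun_prop) _ _)
        (Continuous.intervalIntegrable (by fun_prop) _ _)]
    simp only [intervalIntegral.integral_const, intervalIntegral.integral_mul_const, integral_id,
      integral_pow, smul_eq_mul]
    push_cast
    ring
  simp only [norm_sq_lineMap]
  rw [integral_quadratic, norm_add_sq_real, norm_sub_sq_real, inner_sub_right,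
    real_inner_self_eq_norm_sq, real_inner_comm]
  ring

theorem integral_norm_sq_lineMap (hab : a ≠ b) (p q : E) :
    ∫ s in a..b, ‖lineMap p q ((s - a) / (b - a))‖ ^ 2 =
      (b - a) / 6 * (‖p‖ ^ 2 + ‖q‖ ^ 2 + ‖p + q‖ ^ 2) := by
  have hba : b - a ≠ 0 := sub_ne_zero.2 hab.symm
  simp only [sub_div]
  rw [intervalIntegral.integral_comp_div_sub (fun x => ‖lineMap p q x‖ ^ 2) hba, sub_self,
    ← sub_div, div_self hba, integral_norm_sq_lineMap_unit, smul_eq_mul]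
  ring

theorem le_integral_norm_sq_lineMap (hab : a < b) (p q : E) :
    1 / 6 * ((‖p‖ ^ 2 + ‖q‖ ^ 2) * (b - a)) ≤
      ∫ s in a..b, ‖lineMap p q ((s - a) / (b - a))‖ ^ 2 := by
  calc 1 / 6 * ((‖p‖ ^ 2 + ‖q‖ ^ 2) * (b - a))
      = (b - a) / 6 * (‖p‖ ^ 2 + ‖q‖ ^ 2) := by ring
    _ ≤ (b - a) / 6 * (‖p‖ ^ 2 + ‖q‖ ^ 2 + ‖p + q‖ ^ 2) :=
      mul_le_mul_of_nonneg_left (le_add_of_nonneg_right (sq_nonneg _)) (by linarith)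
    _ = _ := (integral_norm_sq_lineMap hab.ne p q).symm

theorem integral_norm_sq_lineMap_le (hab : a < b) (p q : E) :
    ∫ s in a..b, ‖lineMap p q ((s - a) / (b - a))‖ ^ 2 ≤
      1 / 2 * ((‖p‖ ^ 2 + ‖q‖ ^ 2) * (b - a)) := by
  have norm_add_sq_le : ‖p + q‖ ^ 2 ≤ 2 * (‖p‖ ^ 2 + ‖q‖ ^ 2) := by
    nlinarith [parallelogram_law_with_norm ℝ p q, sq_nonneg ‖p - q‖]
  calc ∫ s in a..b, ‖lineMap p q ((s - a) / (b - a))‖ ^ 2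
      = (b - a) / 6 * (‖p‖ ^ 2 + ‖q‖ ^ 2 + ‖p + q‖ ^ 2) := integral_norm_sq_lineMap hab.ne p q
    _ ≤ (b - a) / 6 * (‖p‖ ^ 2 + ‖q‖ ^ 2 + 2 * (‖p‖ ^ 2 + ‖q‖ ^ 2)) :=
      mul_le_mul_of_nonneg_left (by linarith) (by linarith)
    _ = 1 / 2 * ((‖p‖ ^ 2 + ‖q‖ ^ 2) * (b - a)) := by ring

end Element

theorem integral_eq_sum_of_eqOn_uIoc {E : Type*} [NormedAddCommGroup E] [NormedSpace ℝ E] {n : ℕ}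
    {t : ℕ → ℝ} {μ : Measure ℝ} {f : ℝ → E} {g : ℕ → ℝ → E}
    (hg : ∀ j < n, IntervalIntegrable (g j) μ (t j) (t (j + 1)))
    (hfg : ∀ j < n, EqOn f (g j) (uIoc (t j) (t (j + 1)))) :
    ∫ s in t 0..t n, f s ∂μ = ∑ j ∈ Finset.range n, ∫ s in t j..t (j + 1), g j s ∂μ := by
  have integrable : ∀ j < n, IntervalIntegrable f μ (t j) (t (j + 1)) := fun j hj =>
    (intervalIntegrable_congr (hfg j hj)).2 (hg j hj)
  rw [← intervalIntegral.sum_integral_adjacent_intervals integrable]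
  refine Finset.sum_congr rfl fun j hj => intervalIntegral.integral_congr_ae ?_
  exact .of_forall fun s hs => hfg j (Finset.mem_range.1 hj) hs

theorem stmt8_general {E : Type*} [NormedAddCommGroup E] [InnerProductSpace ℝ E]
    {n : ℕ} (hn : 1 ≤ n) {t : ℕ → ℝ} (ht : ∀ j < n, t j < t (j + 1)) {y : ℕ → E} {v : ℝ → E}
    (hv : ∀ j < n, ∀ s ∈ Icc (t j) (t (j + 1)),
      v s = lineMap (y j) (y (j + 1)) ((s - t j) / (t (j + 1) - t j)))
    {ω : ℕ → ℝ} (hω0 : ω 0 = t 1 - t 0) (hωn : ω n = t n - t (n - 1))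
    (hωj : ∀ j, 0 < j → j < n → ω j = t (j + 1) - t (j - 1)) :
    1 / 6 * ∑ j ∈ Finset.range (n + 1), ‖y j‖ ^ 2 * ω j ≤ ∫ s in t 0..t n, ‖v s‖ ^ 2 ∧
      ∫ s in t 0..t n, ‖v s‖ ^ 2 ≤ 1 / 2 * ∑ j ∈ Finset.range (n + 1), ‖y j‖ ^ 2 * ω j := by
  have integral_split : ∫ s in t 0..t n, ‖v s‖ ^ 2 = ∑ j ∈ Finset.range n,
      ∫ s in t j..t (j + 1),
        ‖lineMap (y j) (y (j + 1)) ((s - t j) / (t (j + 1) - t j))‖ ^ 2 := by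
    refine integral_eq_sum_of_eqOn_uIoc (fun j _ => ?integrable) fun j hj s hs => ?agree
    case integrable =>
      simp only [norm_sq_lineMap]
      exact Continuous.intervalIntegrable (by fun_prop) _ _
    case agree =>
      rw [uIoc_of_le (ht j hj).le] at hs
      exact congrArg (‖·‖ ^ 2) (hv j hj s (Ioc_subset_Icc_self hs))
  rw [integral_split, sum_mul_patchWidth hn hω0 hωn hωj (fun j => ‖y j‖ ^ 2), Finset.mul_sum,
    Finset.mul_sum]
  constructor <;> refine Finset.sum_le_sum fun j hj => ?_
  · exact le_integral_norm_sq_lineMap (ht j (Finset.mem_range.1 hj)) _ _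
  · exact integral_norm_sq_lineMap_le (ht j (Finset.mem_range.1 hj)) _ _

/-- One-dimensional `L²` mass equivalence for piecewise affine functions:
if `v` is the continuous piecewise affine function on the partition
`a = t 0 < t 1 < … < t n = b` with nodal values `v (t j) = y j`, and
`ω j` denotes the width of the `j`-th nodal patch, then
`(1/6) ∑ y_j² ω_j ≤ ∫_a^b v² ≤ (1/2) ∑ y_j² ω_j`. -/
theorem stmt8 (n : ℕ) (hn : 1 ≤ n) (a b : ℝ) (t y : ℕ → ℝ)
    (ht0 : t 0 = a) (htn : t n = b)
    (hmono : ∀ j < n, t j < t (j + 1))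
    (v : ℝ → ℝ)
    (hval : ∀ j ≤ n, v (t j) = y j)
    (haff : ∀ j < n, ∀ s ∈ Set.Icc (t j) (t (j + 1)),
      v s = y j + (y (j + 1) - y j) * (s - t j) / (t (j + 1) - t j))
    (ω : ℕ → ℝ)
    (hω0 : ω 0 = t 1 - t 0) (hωn : ω n = t n - t (n - 1))
    (hωj : ∀ j, 0 < j → j < n → ω j = t (j + 1) - t (j - 1)) :
    (1 / 6) * ∑ j ∈ Finset.range (n + 1), (y j) ^ 2 * ω j ≤ (∫ s in a..b, (v s) ^ 2) ∧
      (∫ s in a..b, (v s) ^ 2) ≤ (1 / 2) * ∑ j ∈ Finset.range (n + 1), (y j) ^ 2 * ω j := by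
  have hv : ∀ j < n, ∀ s ∈ Icc (t j) (t (j + 1)),
      v s = lineMap (y j) (y (j + 1)) ((s - t j) / (t (j + 1) - t j)) := fun j hj s hs => by
    rw [haff j hj s hs, AffineMap.lineMap_apply_ring']; ring
  simpa only [ht0, htn, Real.norm_eq_abs, sq_abs] using stmt8_general hn hmono hv hω0 hωn hωj
end

section
/- Let R ⊂ ℝ² be a nonempty bounded open convex set. Then there exists a constant C > 0 (depending only on R) such that for every ε ∈ (0, 1/2) and every continuous function v : ℝ² → ℝ one has ∫_{∂R} v(x)² dμ_H¹(x) ≤ C² ε^{-1} ( ∫_R v(x)² dx + ∫_R ∫_R |v(x) − v(y)|² / |x − y|^{3+2ε} dx dy ), where μ_H¹ is the one-dimensional Hausdorff measure on the boundary ∂R and the inequality is understood in [0, ∞] (both sides may be infinite). -/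
open MeasureTheory
open scoped ENNReal NNReal

/-!
Fix a ball `B` well inside `R`. For `x` on the boundary let `Bₖ(x)` be the copy of `B` shrunk
towards `x` with ratio `sₖ = 2^{-(k+1)}`, and let `aₖ` be the average of `v` over `Bₖ(x)`, so that
`aₖ → v x`. Telescoping and Cauchy–Schwarz with the weights `sₖ^{2ε}`, whose sum is at most `1/ε`,
bound `v(x)²` by `a₀²` and `ε⁻¹ ∑ sₖ^{-2ε} (aₖ - aₖ₊₁)²`. By Jensen, `(aₖ - aₖ₊₁)²` is at most a
normalised Gagliardo energy of `Bₖ(x) × R`.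

To integrate over the boundary: the points `x` whose copy `Bₖ(x)` contains a given `y` lie in a
ball of radius comparable to `sₖ`, and the sets swept out by the `Bₖ(x)` are disjoint for
different `k`, because their depth below a supporting hyperplane is comparable to `sₖ`. So the
energies add up to at most the energy of `R × R`, provided the boundary measure of a ball of
radius `r` in `ℝⁿ⁺¹` is at most a multiple of `rⁿ`. This holds because moving a boundary point
along an outer normal until it meets the surface of a surrounding cube never decreases distances.
-/

open Metric Set Filter Topology
open scoped RealInnerProductSpace

section ConvexSurface

variable {E : Type*} [NormedAddCommGroup E]

theorem exists_add_smul_mem_frontier [NormedSpace ℝ E] {K : Set E} (hK : Bornology.IsBounded K)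
    {x : E} (hx : x ∈ K) {n : E} (hn : n ≠ 0) : ∃ t : ℝ≥0, x + t • n ∈ frontier K := by
  have hray : Continuous fun t : ℝ≥0 => x + t • n := by fun_prop
  have hne_univ : (fun t : ℝ≥0 => x + t • n) ⁻¹' K ≠ univ := by
    intro huniv
    obtain ⟨r, hr⟩ := hK.subset_closedBall x
    have hn0 : 0 < ‖n‖ := norm_pos_iff.2 hn
    obtain ⟨t, ht⟩ := exists_gt ((r / ‖n‖).toNNReal)
    have hmem : x + t • n ∈ closedBall x r := hr (huniv.ge (mem_univ t))
    rw [mem_closedBall, dist_self_add_left, NNReal.smul_def, norm_smul, NNReal.norm_eq,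
      ← le_div_iff₀ hn0] at hmem
    exact (Real.le_coe_toNNReal _).trans_lt (NNReal.coe_lt_coe.2 ht) |>.not_ge hmem
  have hfrontier : (frontier ((fun t : ℝ≥0 => x + t • n) ⁻¹' K)).Nonempty :=
    nonempty_frontier_iff.2 ⟨⟨0, by simpa using hx⟩, hne_univ⟩
  obtain ⟨t, ht⟩ := hfrontier
  exact ⟨t, hray.frontier_preimage_subset K ht⟩

variable [InnerProductSpace ℝ E]

theorem dist_le_dist_of_inner_nonpos {x y p q : E} (hx : ⟪p - x, y - x⟫ ≤ 0)
    (hy : ⟪q - y, x - y⟫ ≤ 0) : dist x y ≤ dist p q := by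
  have hsq : ‖x - y‖ ^ 2 ≤ ⟪p - q, x - y⟫ := by
    have hsplit : p - q = (p - x) - (q - y) + (x - y) := by abel
    rw [hsplit, inner_add_left, inner_sub_left, real_inner_self_eq_norm_sq]
    rw [← neg_sub x y, inner_neg_right] at hx
    linarith
  rw [dist_eq_norm, dist_eq_norm]
  by_contra! hlt
  nlinarith [real_inner_le_norm (p - q) (x - y), norm_nonneg (p - q)]

variable [CompleteSpace E] {R : Set E}

theorem exists_unit_normal (hR : IsOpen R) (hRc : Convex ℝ R) {x : E} (hx : x ∈ frontier R) :
    ∃ n : E, ‖n‖ = 1 ∧ ∀ w ∈ closure R, ⟪n, w - x⟫ ≤ 0 := by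
  obtain ⟨f, hf⟩ := geometric_hahn_banach_open_point hRc hR (hR.frontier_eq ▸ hx).2
  have hf_closure : ∀ w ∈ closure R, f w ≤ f x := fun w hw =>
    closure_minimal (fun a ha => (hf a ha).le) (isClosed_le f.continuous continuous_const) hw
  set m : E := (InnerProductSpace.toDual ℝ E).symm f
  have hinner : ∀ w, ⟪m, w⟫ = f w := fun w => InnerProductSpace.toDual_symm_apply
  have hm0 : m ≠ 0 := by
    intro h0
    obtain ⟨a, ha⟩ := closure_nonempty_iff.1 ⟨x, frontier_subset_closure hx⟩
    simpa [← hinner, h0] using hf a ha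
  refine ⟨‖m‖⁻¹ • m, norm_smul_inv_norm (𝕜 := ℝ) hm0, fun w hw => ?_⟩
  rw [real_inner_smul_left, inner_sub_right, hinner, hinner]
  exact mul_nonpos_of_nonneg_of_nonpos (by positivity) (sub_nonpos.2 (hf_closure w hw))

variable [MeasurableSpace E] [BorelSpace E]

theorem hausdorffMeasure_frontier_inter_le (hR : IsOpen R) (hRc : Convex ℝ R) {K : Set E}
    (hK : Bornology.IsBounded K) {d : ℝ} (hd : 0 ≤ d) :
    μH[d] (frontier R ∩ K) ≤ μH[d] (frontier K) := by
  have hproj : ∀ x : ↥(frontier R ∩ K), ∃ p ∈ frontier K,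
      ∀ w ∈ closure R, ⟪p - x, w - x⟫ ≤ 0 := by
    rintro ⟨x, hxR, hxK⟩
    obtain ⟨n, hn, hsupp⟩ := exists_unit_normal hR hRc hxR
    obtain ⟨t, ht⟩ := exists_add_smul_mem_frontier hK hxK (norm_ne_zero_iff.1 (hn ▸ one_ne_zero))
    refine ⟨x + t • n, ht, fun w hw => ?_⟩
    rw [add_sub_cancel_left, NNReal.smul_def, real_inner_smul_left]
    exact mul_nonpos_of_nonneg_of_nonpos t.2 (hsupp w hw)
  choose p hpK hp using hproj
  have hanti : AntilipschitzWith 1 p := AntilipschitzWith.of_le_mul_dist fun x y => by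
    simpa only [NNReal.coe_one, one_mul, Subtype.dist_eq] using
      dist_le_dist_of_inner_nonpos (hp x y (frontier_subset_closure y.2.1))
        (hp y x (frontier_subset_closure x.2.1))
  calc μH[d] (frontier R ∩ K) = μH[d] (univ : Set ↥(frontier R ∩ K)) := by
        rw [← (isometry_subtype_coe (s := frontier R ∩ K)).hausdorffMeasure_image (Or.inl hd),
          image_univ, Subtype.range_coe]
    _ ≤ μH[d] (p '' univ) := by simpa using hanti.le_hausdorffMeasure_image hd univ
    _ ≤ μH[d] (frontier K) := measure_mono (image_subset_iff.2 fun x _ => hpK x)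

end ConvexSurface

section Cube

variable {n : ℕ}

theorem sphere_subset_iUnion_insertNth (p : Fin (n + 1) → ℝ) (ρ : ℝ) :
    sphere p ρ ⊆ ⋃ i, ⋃ a ∈ ({p i + ρ, p i - ρ} : Finset ℝ),
      Fin.insertNth (α := fun _ => ℝ) i a '' closedBall (i.removeNth p) ρ := by
  rw [sphere_pi p (Or.inr inferInstance)]
  rintro x ⟨hx, hxball⟩
  obtain ⟨i, hi⟩ := mem_iUnion.1 hx
  refine mem_iUnion.2 ⟨i, mem_iUnion₂.2
    ⟨x i, ?_, i.removeNth x, ?_, Fin.insertNth_self_removeNth i x⟩⟩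
  · rw [Finset.mem_insert, Finset.mem_singleton]
    have habs : |x i - p i| = ρ := hi
    rcases eq_or_eq_neg_of_abs_eq habs with h | h
    · exact Or.inl (by linarith)
    · exact Or.inr (by linarith)
  · have hρ : 0 ≤ ρ := dist_nonneg.trans hxball
    exact (dist_pi_le_iff hρ).2 fun j => (dist_le_pi_dist x p (i.succAbove j)).trans hxball

theorem hausdorffMeasure_insertNth_image_closedBall (i : Fin (n + 1)) (a : ℝ) (q : Fin n → ℝ)
    {ρ : ℝ} (hρ : 0 ≤ ρ) :
    μH[n] (Fin.insertNth (α := fun _ => ℝ) i a '' closedBall q ρ) =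
      ENNReal.ofReal (2 * ρ) ^ n := by
  have hiso : Isometry (Fin.insertNth (α := fun _ => ℝ) i a) := Isometry.of_dist_eq fun x y => by
    rw [Fin.dist_insertNth_insertNth, dist_self, max_eq_right dist_nonneg]
  have hvolume : (μH[n] : Measure (Fin n → ℝ)) = volume := by
    simpa only [Fintype.card_fin] using hausdorffMeasure_pi_real (ι := Fin n)
  rw [hiso.hausdorffMeasure_image (Or.inl n.cast_nonneg), hvolume,
    Real.volume_pi_closedBall _ hρ, Fintype.card_fin, ENNReal.ofReal_pow (by positivity)]

theorem hausdorffMeasure_sphere_pi_le (p : Fin (n + 1) → ℝ) {ρ : ℝ} (hρ : 0 ≤ ρ) :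
    μH[n] (sphere p ρ) ≤ (n + 1) * (2 * ENNReal.ofReal (2 * ρ) ^ n) := by
  calc μH[n] (sphere p ρ)
      ≤ ∑ i : Fin (n + 1), ∑ a ∈ ({p i + ρ, p i - ρ} : Finset ℝ),
          μH[n] (Fin.insertNth (α := fun _ => ℝ) i a '' closedBall (i.removeNth p) ρ) :=
        (measure_mono (sphere_subset_iUnion_insertNth p ρ)).trans <|
          (measure_iUnion_fintype_le _ _).trans <|
            Finset.sum_le_sum fun i _ => measure_biUnion_finset_le _ _
    _ ≤ ∑ i : Fin (n + 1), 2 * ENNReal.ofReal (2 * ρ) ^ n := by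
        gcongr with i
        simp only [hausdorffMeasure_insertNth_image_closedBall _ _ _ hρ, Finset.sum_const,
          nsmul_eq_mul]
        gcongr
        exact_mod_cast Finset.card_le_two
    _ = (n + 1) * (2 * ENNReal.ofReal (2 * ρ) ^ n) := by simp

theorem exists_hausdorffMeasure_frontier_inter_ball_le (n : ℕ) : ∃ A : ℝ≥0,
    ∀ R : Set (EuclideanSpace ℝ (Fin (n + 1))), IsOpen R → Convex ℝ R →
      ∀ p ρ, 0 ≤ ρ → μH[n] (frontier R ∩ ball p ρ) ≤ A * ENNReal.ofReal ρ ^ n := by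
  set L : ℝ≥0 := (Fintype.card (Fin (n + 1)) : ℝ≥0) ^ (1 / (2 : ℝ≥0∞)).toReal
  have hLip : LipschitzWith L (WithLp.toLp 2 : (Fin (n + 1) → ℝ) → EuclideanSpace ℝ _) :=
    PiLp.lipschitzWith_toLp 2 fun _ => ℝ
  refine ⟨L ^ n * ((n + 1) * (2 * 2 ^ n)), fun R hR hRc p ρ hρ => ?_⟩
  set Q : Set (EuclideanSpace ℝ (Fin (n + 1))) := WithLp.ofLp ⁻¹' closedBall p.ofLp ρ
  have hQ_image : Q = WithLp.toLp 2 '' closedBall p.ofLp ρ :=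
    ((WithLp.equiv 2 _).symm.image_eq_preimage_symm _).symm
  have hQ : Bornology.IsBounded Q := by
    rw [hQ_image]
    exact hLip.isBounded_image isBounded_closedBall
  have hball : ball p ρ ⊆ Q := fun x hx => by
    have := (PiLp.lipschitzWith_ofLp 2 fun _ => ℝ).dist_le_mul x p
    simp only [NNReal.coe_one, one_mul] at this
    exact this.trans (mem_ball.1 hx).le
  have hfrontier : frontier Q ⊆ WithLp.toLp 2 '' sphere p.ofLp ρ := fun x hx =>
    ⟨x.ofLp, frontier_closedBall_subset_sphere
      ((PiLp.continuous_ofLp 2 _).frontier_preimage_subset _ hx), rfl⟩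
  calc μH[n] (frontier R ∩ ball p ρ) ≤ μH[n] (frontier R ∩ Q) := by gcongr
    _ ≤ μH[n] (frontier Q) := hausdorffMeasure_frontier_inter_le hR hRc hQ n.cast_nonneg
    _ ≤ L ^ n * μH[n] (sphere p.ofLp ρ) := by
        simpa only [ENNReal.rpow_natCast] using
          (measure_mono hfrontier).trans (hLip.hausdorffMeasure_image_le n.cast_nonneg _)
    _ ≤ L ^ n * ((n + 1) * (2 * ENNReal.ofReal (2 * ρ) ^ n)) := by
        gcongr
        exact hausdorffMeasure_sphere_pi_le _ hρ
    _ = _ := by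
        rw [ENNReal.ofReal_mul zero_le_two, mul_pow, ENNReal.ofReal_ofNat]
        push_cast
        ring

theorem hausdorffMeasure_frontier_lt_top {R : Set (EuclideanSpace ℝ (Fin (n + 1)))}
    (hR : IsOpen R) (hRc : Convex ℝ R) (hRb : Bornology.IsBounded R) :
    μH[n] (frontier R) < ∞ := by
  obtain ⟨A, hA⟩ := exists_hausdorffMeasure_frontier_inter_ball_le n
  obtain ⟨r, hr, hball⟩ := hRb.closure.subset_ball_lt 0 0
  refine (measure_mono ?_).trans_lt ((hA R hR hRc 0 r hr.le).trans_lt (by finiteness))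
  exact subset_inter subset_rfl (frontier_subset_closure.trans hball)

end Cube

section DyadicScale

/-- The ratios `2⁻¹, 2⁻², 2⁻³, …` at which homothetic copies of a ball are taken. They start at
`2⁻¹` because at ratio `1` the copy of the ball no longer depends on the centre of the homothety. -/
noncomputable def dyadicScale (k : ℕ) : ℝ := 2⁻¹ ^ (k + 1)

theorem dyadicScale_pos (k : ℕ) : 0 < dyadicScale k := by unfold dyadicScale; positivity

theorem dyadicScale_succ (k : ℕ) : dyadicScale (k + 1) = dyadicScale k / 2 := by
  rw [dyadicScale, dyadicScale, pow_succ, div_eq_mul_inv]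

theorem dyadicScale_antitone : Antitone dyadicScale :=
  antitone_nat_of_succ_le fun k => by
    rw [dyadicScale_succ]
    exact half_le_self (dyadicScale_pos k).le

theorem dyadicScale_le_half (k : ℕ) : dyadicScale k ≤ 1 / 2 :=
  (dyadicScale_antitone k.zero_le).trans_eq (by norm_num [dyadicScale])

theorem dyadicScale_le_half_of_lt {j k : ℕ} (h : j < k) : dyadicScale k ≤ dyadicScale j / 2 :=
  (dyadicScale_antitone h).trans_eq (dyadicScale_succ j)

theorem tendsto_dyadicScale : Tendsto dyadicScale atTop (𝓝 0) :=
  (tendsto_pow_atTop_nhds_zero_of_lt_one (by norm_num) (by norm_num)).comp (tendsto_add_atTop_nat 1)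

theorem one_add_le_two_rpow {ε : ℝ} (hε : 0 ≤ ε) : 1 + ε ≤ (2 : ℝ) ^ (2 * ε) := by
  calc 1 + ε ≤ Real.log 2 * (2 * ε) + 1 := by nlinarith [Real.log_two_gt_d9]
    _ ≤ 2 ^ (2 * ε) := by
        rw [Real.rpow_def_of_pos two_pos]
        exact Real.add_one_le_exp _

theorem sum_dyadicScale_rpow_le {ε : ℝ} (hε : 0 < ε) (N : ℕ) :
    ∑ k ∈ Finset.range N, dyadicScale k ^ (2 * ε) ≤ 1 / ε := by
  set r : ℝ := 2⁻¹ ^ (2 * ε)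
  have hr0 : 0 ≤ r := by positivity
  have hr : r * (1 + ε) ≤ 1 := by
    calc r * (1 + ε) ≤ r * 2 ^ (2 * ε) := by gcongr; exact one_add_le_two_rpow hε.le
      _ = 1 := by rw [← Real.mul_rpow (by norm_num) (by norm_num)]; norm_num
  have hr1 : r < 1 := by nlinarith
  have hpow (k : ℕ) : dyadicScale k ^ (2 * ε) = r * r ^ k := by
    rw [dyadicScale, ← Real.rpow_natCast_mul (by norm_num), mul_comm,
      Real.rpow_mul_natCast (by norm_num), pow_succ']
  calc ∑ k ∈ Finset.range N, dyadicScale k ^ (2 * ε)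
      = r * ∑ k ∈ Finset.range N, r ^ k := by simp only [hpow, Finset.mul_sum]
    _ ≤ r * (1 - r)⁻¹ := by
        gcongr
        rw [← tsum_geometric_of_lt_one hr0 hr1]
        exact (summable_geometric_of_lt_one hr0 hr1).sum_le_tsum _ fun k _ => by positivity
    _ ≤ 1 / ε := by
        rw [← div_eq_mul_inv, div_le_div_iff₀ (sub_pos.2 hr1) hε]
        linarith

theorem sq_le_of_sum_le {a w : ℕ → ℝ} (hw : ∀ k, 0 < w k) {W : ℝ} {N : ℕ}
    (hW : ∑ k ∈ Finset.range N, w k ≤ W) :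
    a N ^ 2 ≤ 2 * a 0 ^ 2 + 2 * W * ∑ k ∈ Finset.range N, (w k)⁻¹ * (a k - a (k + 1)) ^ 2 := by
  have hnonneg (k : ℕ) : 0 ≤ (w k)⁻¹ * (a k - a (k + 1)) ^ 2 :=
    mul_nonneg (inv_nonneg.2 (hw k).le) (sq_nonneg _)
  have hCS : (a 0 - a N) ^ 2 ≤ W * ∑ k ∈ Finset.range N, (w k)⁻¹ * (a k - a (k + 1)) ^ 2 := by
    rw [← Finset.sum_range_sub']
    refine (Finset.sum_sq_le_sum_mul_sum_of_sq_le_mul _ (fun k _ => (hw k).le)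
      (fun k _ => hnonneg k) fun k _ => ?_).trans
      (mul_le_mul_of_nonneg_right hW (Finset.sum_nonneg fun k _ => hnonneg k))
    rw [mul_inv_cancel_left₀ (hw k).ne']
  linarith [sq_nonneg (2 * a 0 - a N)]

theorem ofReal_sq_le_of_tendsto {a w : ℕ → ℝ} {l W : ℝ} (ha : Tendsto a atTop (𝓝 l))
    (hw : ∀ k, 0 < w k) (hW : ∀ N, ∑ k ∈ Finset.range N, w k ≤ W) :
    ENNReal.ofReal (l ^ 2) ≤ 2 * ENNReal.ofReal (a 0 ^ 2) +
      2 * ENNReal.ofReal W * ∑' k, ENNReal.ofReal ((w k)⁻¹ * (a k - a (k + 1)) ^ 2) := by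
  have hnonneg (k : ℕ) : 0 ≤ (w k)⁻¹ * (a k - a (k + 1)) ^ 2 :=
    mul_nonneg (inv_nonneg.2 (hw k).le) (sq_nonneg _)
  have hW0 : 0 ≤ W := by simpa using hW 0
  refine le_of_tendsto (ENNReal.tendsto_ofReal (ha.pow 2)) (.of_forall fun N => ?_)
  calc ENNReal.ofReal (a N ^ 2)
      ≤ ENNReal.ofReal (2 * a 0 ^ 2 +
          2 * W * ∑ k ∈ Finset.range N, (w k)⁻¹ * (a k - a (k + 1)) ^ 2) :=
        ENNReal.ofReal_le_ofReal (sq_le_of_sum_le hw (hW N))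
    _ = 2 * ENNReal.ofReal (a 0 ^ 2) + 2 * ENNReal.ofReal W *
          ∑ k ∈ Finset.range N, ENNReal.ofReal ((w k)⁻¹ * (a k - a (k + 1)) ^ 2) := by
        rw [ENNReal.ofReal_add (by positivity)
            (mul_nonneg (by positivity) (Finset.sum_nonneg fun k _ => hnonneg k)),
          ENNReal.ofReal_mul (by positivity), ENNReal.ofReal_mul (by positivity),
          ENNReal.ofReal_mul (by positivity), ENNReal.ofReal_sum_of_nonneg fun k _ => hnonneg k,
          ENNReal.ofReal_ofNat]
    _ ≤ _ := by gcongr; exact ENNReal.sum_le_tsum _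

end DyadicScale

section Average

variable {α β : Type*} [MeasurableSpace α] [MeasurableSpace β] {μ : Measure α} {ν : Measure β}

theorem ofReal_sq_average_le [IsFiniteMeasure μ] {f : α → ℝ} (hf : AEStronglyMeasurable f μ) :
    ENNReal.ofReal ((⨍ x, f x ∂μ) ^ 2) ≤ ⨍⁻ x, ENNReal.ofReal (f x ^ 2) ∂μ := by
  rcases eq_or_ne μ 0 with rfl | hμ
  · simp
  have : NeZero μ := ⟨hμ⟩
  have hL2 : eLpNorm f 1 ((μ univ)⁻¹ • μ) ≤ eLpNorm f 2 ((μ univ)⁻¹ • μ) :=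
    eLpNorm_le_eLpNorm_of_exponent_le one_le_two (hf.smul_measure _)
  have hsq (r : ℝ) : ENNReal.ofReal (r ^ 2) = ‖r‖ₑ ^ 2 := by
    rw [← Real.enorm_of_nonneg (sq_nonneg r), enorm_pow]
  simp only [hsq]
  calc ‖⨍ x, f x ∂μ‖ₑ ^ 2 ≤ eLpNorm f 2 ((μ univ)⁻¹ • μ) ^ 2 := by
        gcongr
        exact (enorm_integral_le_lintegral_enorm f).trans
          (eLpNorm_one_eq_lintegral_enorm.ge.trans hL2)
    _ = ⨍⁻ x, ‖f x‖ₑ ^ 2 ∂μ := by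
        simpa only [laverage, NNReal.coe_ofNat, ENNReal.coe_ofNat, ENNReal.rpow_ofNat] using
          eLpNorm_nnreal_pow_eq_lintegral (f := f) (μ := (μ univ)⁻¹ • μ) (two_ne_zero (α := ℝ≥0))

theorem ofReal_sq_average_sub_average_le [IsFiniteMeasure μ] [NeZero μ] [IsFiniteMeasure ν]
    [NeZero ν] {f : α → ℝ} {g : β → ℝ} (hf : Integrable f μ) (hg : Integrable g ν) :
    ENNReal.ofReal ((⨍ x, f x ∂μ - ⨍ y, g y ∂ν) ^ 2) ≤
      ⨍⁻ x, ⨍⁻ y, ENNReal.ofReal ((f x - g y) ^ 2) ∂ν ∂μ := by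
  have hleft (b : ℝ) : ⨍ x, f x ∂μ - b = ⨍ x, (f x - b) ∂μ := by
    rw [average, average, integral_sub hf.to_average (integrable_const b), integral_const,
      probReal_univ, one_smul]
  have hright (b : ℝ) : b - ⨍ y, g y ∂ν = ⨍ y, (b - g y) ∂ν := by
    rw [average, average, integral_sub (integrable_const b) hg.to_average, integral_const,
      probReal_univ, one_smul]
  rw [hleft]
  refine (ofReal_sq_average_le (hf.1.sub aestronglyMeasurable_const)).trans ?_
  refine lintegral_mono fun x => ?_
  rw [Pi.sub_apply, hright]
  exact ofReal_sq_average_le (aestronglyMeasurable_const.sub hg.1)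

theorem tendsto_setAverage_of_continuousAt [TopologicalSpace α] {ι : Type*} {l : Filter ι}
    {A : ι → Set α} {x : α} {f : α → ℝ} (hA : Tendsto A l (𝓝 x).smallSets)
    (hmeas : ∀ i, MeasurableSet (A i)) (hμ : ∀ i, μ (A i) ≠ 0) (hμ' : ∀ i, μ (A i) ≠ ∞)
    (hint : ∀ i, IntegrableOn f (A i) μ) (hf : ContinuousAt f x) :
    Tendsto (fun i => ⨍ y in A i, f y ∂μ) l (𝓝 (f x)) := by
  refine nhds_basis_closedBall.tendsto_right_iff.2 fun η hη => ?_
  filter_upwards [tendsto_smallSets_iff.1 hA _ (hf (closedBall_mem_nhds _ hη))] with i hi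
  exact (convex_closedBall _ _).set_average_mem isClosed_closedBall (hμ i) (hμ' i)
    (ae_restrict_of_forall_mem (hmeas i) hi) (hint i)

end Average

section GagliardoKernel

variable {E : Type*} [NormedAddCommGroup E]

/-- The integrand of the squared Gagliardo seminorm of `v`, with values in `[0, ∞]`. In dimension
`d` the seminorm of order `s` has `q = d + 2 * s`. It vanishes on the diagonal, as `x / 0 = 0`. -/
noncomputable def gagliardoKernel (q : ℝ) (v : E → ℝ) (y z : E) : ℝ≥0∞ :=
  ENNReal.ofReal (|v y - v z| ^ 2 / ‖y - z‖ ^ q)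

variable {q : ℝ} {v : E → ℝ}

theorem ofReal_sq_sub_le_gagliardoKernel (hq : 0 ≤ q) {y z : E} {δ : ℝ} (h : dist y z ≤ δ) :
    ENNReal.ofReal ((v y - v z) ^ 2) ≤ ENNReal.ofReal (δ ^ q) * gagliardoKernel q v y z := by
  rcases eq_or_ne y z with rfl | hne
  · simp
  have hδ : 0 ≤ δ := dist_nonneg.trans h
  have hpos : 0 < ‖y - z‖ ^ q := Real.rpow_pos_of_pos (norm_pos_iff.2 (sub_ne_zero.2 hne)) q
  rw [gagliardoKernel, ← ENNReal.ofReal_mul (by positivity), ← mul_div_assoc, mul_comm,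
    ← sq_abs (v y - v z)]
  refine ENNReal.ofReal_le_ofReal ((le_div_iff₀ hpos).2 ?_)
  gcongr
  rwa [← dist_eq_norm]

variable [MeasurableSpace E]

theorem ofReal_sq_setAverage_sub_le {μ : Measure E} (hq : 0 ≤ q) {A B : Set E}
    (hA : MeasurableSet A) (hB : MeasurableSet B) (hμA : μ A ≠ 0) (hμA' : μ A ≠ ∞)
    (hμB : μ B ≠ 0) (hμB' : μ B ≠ ∞) (hvA : IntegrableOn v A μ) (hvB : IntegrableOn v B μ)
    {δ : ℝ} (hδ : ∀ y ∈ A, ∀ z ∈ B, dist y z ≤ δ) :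
    ENNReal.ofReal ((⨍ y in A, v y ∂μ - ⨍ z in B, v z ∂μ) ^ 2) ≤
      ENNReal.ofReal (δ ^ q) * ⨍⁻ y in A, ⨍⁻ z in B, gagliardoKernel q v y z ∂μ ∂μ := by
  have : Fact (μ A < ∞) := ⟨hμA'.lt_top⟩
  have : Fact (μ B < ∞) := ⟨hμB'.lt_top⟩
  have : NeZero (μ A) := ⟨hμA⟩
  have : NeZero (μ B) := ⟨hμB⟩
  refine (ofReal_sq_average_sub_average_le hvA hvB).trans ?_
  simp only [laverage, ← lintegral_const_mul' _ _ ENNReal.ofReal_ne_top]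
  refine lintegral_mono_ae <|
    Measure.ae_smul_measure (ae_restrict_of_forall_mem hA fun y hy => lintegral_mono_ae ?_) _
  refine Measure.ae_smul_measure (ae_restrict_of_forall_mem hB fun z hz => ?_) _
  exact ofReal_sq_sub_le_gagliardoKernel hq (hδ y hy z hz)

theorem measurable_gagliardoKernel [BorelSpace E] [SecondCountableTopology E] (hv : Measurable v) :
    Measurable fun p : E × E => gagliardoKernel q v p.1 p.2 := by
  unfold gagliardoKernel
  fun_prop

end GagliardoKernel

section Homothety

open AffineMap

variable {E : Type*} [NormedAddCommGroup E]

section NormedSpace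

variable [NormedSpace ℝ E] {B R S : Set E} {x y c : E} {s ρ D : ℝ}

theorem mem_homothety_image_iff (hs : s ≠ 0) : y ∈ homothety x s '' B ↔ homothety x s⁻¹ y ∈ B := by
  refine ⟨?_, fun h => ⟨_, h, ?_⟩⟩
  · rintro ⟨b, hb, rfl⟩
    rwa [← homothety_mul_apply, inv_mul_cancel₀ hs, homothety_one]
  · rw [← homothety_mul_apply, mul_inv_cancel₀ hs, homothety_one, AffineMap.id_apply]

theorem isOpen_setOf_mem_homothety_image (hB : IsOpen B) (hs : s ≠ 0) :
    IsOpen {p : E × E | p.2 ∈ homothety p.1 s '' B} := by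
  simp only [mem_homothety_image_iff hs, homothety_apply]
  exact hB.preimage (by simp only [vsub_eq_sub, vadd_eq_add]; fun_prop)

theorem homothety_image_subset_of_convex (hR : IsOpen R) (hRc : Convex ℝ R) (hx : x ∈ closure R)
    (hBR : B ⊆ R) (hs : 0 < s) (hs1 : s ≤ 1) : homothety x s '' B ⊆ R := by
  rintro _ ⟨b, hb, rfl⟩
  have h := hRc.combo_closure_interior_mem_interior hx (hR.interior_eq.symm ▸ hBR hb)
    (sub_nonneg.2 hs1) hs (sub_add_cancel 1 s)
  rwa [hR.interior_eq, ← lineMap_apply_module, ← homothety_eq_lineMap] at h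

theorem homothety_image_subset_closedBall (hs : 0 ≤ s) (hD : ∀ b ∈ B, dist b x ≤ D) :
    homothety x s '' B ⊆ closedBall x (s * D) := by
  rintro _ ⟨b, hb, rfl⟩
  rw [mem_closedBall, dist_homothety_center, Real.norm_of_nonneg hs, dist_comm]
  exact mul_le_mul_of_nonneg_left (hD b hb) hs

theorem dist_homothety_inv_lt (hs : 0 < s) (hs2 : s ≤ 1 / 2) (hy : y ∈ homothety x s '' ball c ρ) :
    dist x (homothety c (1 - s)⁻¹ y) < 2 * s * ρ := by
  obtain ⟨b, hb, rfl⟩ := hy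
  have h1s : 0 < 1 - s := by linarith
  have hdiff : x - homothety c (1 - s)⁻¹ (homothety x s b) = ((1 - s)⁻¹ * s) • (c - b) := by
    simp only [homothety_apply, vsub_eq_sub, vadd_eq_add]
    match_scalars <;> field_simp <;> ring
  rw [dist_eq_norm, hdiff, norm_smul, Real.norm_of_nonneg (by positivity), ← dist_eq_norm,
    dist_comm]
  have hratio : (1 - s)⁻¹ * s ≤ 2 * s := by
    gcongr
    exact inv_le_of_inv_le₀ two_pos (by linarith)
  calc (1 - s)⁻¹ * s * dist b c ≤ 2 * s * dist b c := by gcongr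
    _ < 2 * s * ρ := by gcongr; exact hb

/-- The layer swept out by the copies of `B` shrunk towards the points of `S` with ratio `s`; for
`S` the boundary of a convex set containing `B` it lies at depth comparable to `s`. -/
def homotheticLayer (S B : Set E) (s : ℝ) : Set E := ⋃ x ∈ S, homothety x s '' B

theorem isOpen_homotheticLayer (hB : IsOpen B) (hs : s ≠ 0) : IsOpen (homotheticLayer S B s) :=
  isOpen_biUnion fun x _ => homothety_isOpenMap x s hs B hB

theorem homotheticLayer_subset (hR : IsOpen R) (hRc : Convex ℝ R) (hBR : B ⊆ R) (hs : 0 < s)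
    (hs1 : s ≤ 1) : homotheticLayer (frontier R) B s ⊆ R :=
  iUnion₂_subset fun _ hx =>
    homothety_image_subset_of_convex hR hRc (frontier_subset_closure hx) hBR hs hs1

end NormedSpace

section Disjoint

variable [InnerProductSpace ℝ E] {R : Set E} {x c n : E} {s t ρ : ℝ}

-- A Harnack inequality for the nonnegative affine function `w ↦ ⟪n, x - w⟫` on the ball.
theorem inner_sub_lt_two_mul_inner_sub (hρ : 0 < ρ) (hn : ‖n‖ = 1)
    (hsupp : ∀ w ∈ closedBall c (3 * ρ), ⟪n, w - x⟫ ≤ 0) {b b' : E} (hb : b ∈ ball c ρ)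
    (hb' : b' ∈ ball c ρ) : ⟪n, x - b'⟫ < 2 * ⟪n, x - b⟫ := by
  have hdepth : 3 * ρ ≤ ⟪n, x - c⟫ := by
    have h := hsupp (c + (3 * ρ) • n) (by simp [norm_smul, hn, abs_of_pos hρ])
    rw [add_sub_right_comm, inner_add_right, real_inner_smul_right, real_inner_self_eq_norm_sq, hn,
      ← neg_sub, inner_neg_right] at h
    linarith
  have hclose {w : E} (hw : w ∈ ball c ρ) : |⟪n, w - c⟫| < ρ := by
    refine (abs_real_inner_le_norm n (w - c)).trans_lt ?_
    rw [hn, one_mul]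
    exact mem_ball_iff_norm.1 hw
  have hsplit (w : E) : ⟪n, x - w⟫ = ⟪n, x - c⟫ - ⟪n, w - c⟫ := by
    rw [← inner_sub_right, sub_sub_sub_cancel_right]
  rw [hsplit b', hsplit b]
  linarith [(abs_lt.1 (hclose hb)).2, (abs_lt.1 (hclose hb')).1]

theorem disjoint_homotheticLayer [CompleteSpace E] (hR : IsOpen R) (hRc : Convex ℝ R) (hρ : 0 < ρ)
    (hcR : closedBall c (3 * ρ) ⊆ R) (ht : 0 < t) (hts : t ≤ s / 2) (hs1 : s ≤ 1) :
    Disjoint (homotheticLayer (frontier R) (ball c ρ) s)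
      (homotheticLayer (frontier R) (ball c ρ) t) := by
  refine Set.disjoint_left.2 fun y hys hyt => ?_
  obtain ⟨x, hx, b, hb, rfl⟩ := mem_iUnion₂.1 hys
  obtain ⟨x', hx', b', hb', hbb'⟩ := mem_iUnion₂.1 hyt
  obtain ⟨n, hn, hsupp⟩ := exists_unit_normal hR hRc hx'
  have hharnack : ⟪n, x' - b'⟫ < 2 * ⟪n, x' - b⟫ :=
    inner_sub_lt_two_mul_inner_sub hρ hn (fun w hw => hsupp w (subset_closure (hcR hw))) hb hb'
  have hheight : t * ⟪n, x' - b'⟫ = (1 - s) * ⟪n, x' - x⟫ + s * ⟪n, x' - b⟫ := by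
    have h := congrArg (fun w => ⟪n, x' - w⟫) hbb'
    simp only [homothety_apply, vsub_eq_sub, vadd_eq_add, inner_add_right, inner_sub_right,
      real_inner_smul_right] at h ⊢
    linarith
  have hx0 : 0 ≤ ⟪n, x' - x⟫ := by
    rw [← neg_sub, inner_neg_right]
    exact neg_nonneg.2 (hsupp x (frontier_subset_closure hx))
  have hb0 : 0 < ⟪n, x' - b⟫ := by
    linarith [inner_sub_lt_two_mul_inner_sub hρ hn
      (fun w hw => hsupp w (subset_closure (hcR hw))) hb hb]
  nlinarith [mul_nonneg (sub_nonneg.2 hs1) hx0, mul_lt_mul_of_pos_left hharnack ht,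
    mul_le_mul_of_nonneg_right hts hb0.le]

end Disjoint

end Homothety

section LayerIntegral

open AffineMap

variable {E : Type*} [NormedAddCommGroup E] [MeasurableSpace E]

section NormedSpace

variable [NormedSpace ℝ E]

theorem measure_setOf_mem_homothety_ball_le {σ : Measure E} {A : ℝ≥0∞} {n : ℕ}
    (hσ : ∀ p r, 0 ≤ r → σ (ball p r) ≤ A * ENNReal.ofReal r ^ n) {s ρ : ℝ} (hs : 0 < s)
    (hs2 : s ≤ 1 / 2) (hρ : 0 ≤ ρ) (c y : E) :
    σ {x | y ∈ homothety x s '' ball c ρ} ≤ A * ENNReal.ofReal (2 * s * ρ) ^ n := by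
  have hsubset : {x | y ∈ homothety x s '' ball c ρ} ⊆
      ball (homothety c (1 - s)⁻¹ y) (2 * s * ρ) := fun x hx =>
    mem_ball.2 (dist_homothety_inv_lt hs hs2 hx)
  exact (measure_mono hsubset).trans (hσ _ _ (by positivity))

variable [BorelSpace E] [SecondCountableTopology E] {μ σ : Measure E} [SFinite μ] [SFinite σ]

theorem lintegral_setLIntegral_homothety_le {B L : Set E} {s : ℝ} {K : ℝ≥0∞} {g : E → ℝ≥0∞}
    (hB : IsOpen B) (hs : s ≠ 0) (hσL : ∀ᵐ x ∂σ, homothety x s '' B ⊆ L)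
    (hσK : ∀ y, σ {x | y ∈ homothety x s '' B} ≤ K) (hg : Measurable g) :
    ∫⁻ x, ∫⁻ y in homothety x s '' B, g y ∂μ ∂σ ≤ K * ∫⁻ y in L, g y ∂μ := by
  set T : Set (E × E) := {p | p.2 ∈ homothety p.1 s '' B}
  have hT : IsOpen T := isOpen_setOf_mem_homothety_image hB hs
  have hTy (y : E) : MeasurableSet {x | y ∈ homothety x s '' B} :=
    (hT.preimage (by fun_prop : Continuous fun x : E => (x, y))).measurableSet
  have hmeas : Measurable (T.indicator fun p => g p.2) :=
    (hg.comp measurable_snd).indicator hT.measurableSet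
  calc ∫⁻ x, ∫⁻ y in homothety x s '' B, g y ∂μ ∂σ
      = ∫⁻ x, ∫⁻ y in L, T.indicator (fun p => g p.2) (x, y) ∂μ ∂σ := by
        refine lintegral_congr_ae (hσL.mono fun x hx => ?_)
        have hopen : MeasurableSet (homothety x s '' B) :=
          (homothety_isOpenMap x s hs B hB).measurableSet
        exact (setLIntegral_indicator hopen g |>.trans (by rw [inter_eq_left.2 hx])).symm
    _ = ∫⁻ y in L, ∫⁻ x, T.indicator (fun p => g p.2) (x, y) ∂σ ∂μ :=
        lintegral_lintegral_swap hmeas.aemeasurable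
    _ = ∫⁻ y in L, σ {x | y ∈ homothety x s '' B} * g y ∂μ := by
        refine lintegral_congr fun y => ?_
        rw [mul_comm]
        exact lintegral_indicator_const (hTy y) (g y)
    _ ≤ ∫⁻ y in L, K * g y ∂μ := by gcongr with y; exact hσK y
    _ = K * ∫⁻ y in L, g y ∂μ := lintegral_const_mul K hg

theorem measurable_setLIntegral_homothety {B : Set E} {s : ℝ} {g : E → ℝ≥0∞} (hB : IsOpen B)
    (hs : s ≠ 0) (hg : Measurable g) :
    Measurable fun x => ∫⁻ y in homothety x s '' B, g y ∂μ := by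
  have hT : MeasurableSet {p : E × E | p.2 ∈ homothety p.1 s '' B} :=
    (isOpen_setOf_mem_homothety_image hB hs).measurableSet
  simp only [← lintegral_indicator (homothety_isOpenMap _ s hs B hB).measurableSet]
  exact ((hg.comp measurable_snd).indicator hT).lintegral_prod_right'

theorem lintegral_setLIntegral_homothety_ball_le {S : Set E} {A : ℝ≥0∞} {n : ℕ} {c : E} {s ρ : ℝ}
    {g : E → ℝ≥0∞} (hσS : ∀ᵐ x ∂σ, x ∈ S)
    (hσ : ∀ p r, 0 ≤ r → σ (ball p r) ≤ A * ENNReal.ofReal r ^ n)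
    (hs : 0 < s) (hs2 : s ≤ 1 / 2) (hρ : 0 ≤ ρ) (hg : Measurable g) :
    ∫⁻ x, ∫⁻ y in homothety x s '' ball c ρ, g y ∂μ ∂σ ≤
      ENNReal.ofReal s ^ n *
        (A * ENNReal.ofReal (2 * ρ) ^ n * ∫⁻ y in homotheticLayer S (ball c ρ) s, g y ∂μ) := by
  calc ∫⁻ x, ∫⁻ y in homothety x s '' ball c ρ, g y ∂μ ∂σ
      ≤ A * ENNReal.ofReal (2 * s * ρ) ^ n *
          ∫⁻ y in homotheticLayer S (ball c ρ) s, g y ∂μ :=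
        lintegral_setLIntegral_homothety_le isOpen_ball hs.ne'
          (hσS.mono fun x hx => subset_biUnion_of_mem (u := fun x => homothety x s '' ball c ρ) hx)
          (measure_setOf_mem_homothety_ball_le hσ hs hs2 hρ c) hg
    _ = _ := by
        rw [mul_right_comm 2, ENNReal.ofReal_mul (by positivity), mul_pow]
        ring

end NormedSpace

theorem lintegral_tsum_homothety_ball_le [InnerProductSpace ℝ E] [FiniteDimensional ℝ E]
    [BorelSpace E] {μ σ : Measure E} [SFinite μ] [SFinite σ] {R : Set E}
    {A : ℝ≥0∞} {n : ℕ} {c : E} {ρ : ℝ} {g : E → ℝ≥0∞} (hR : IsOpen R) (hRc : Convex ℝ R)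
    (hσR : ∀ᵐ x ∂σ, x ∈ frontier R)
    (hσ : ∀ p r, 0 ≤ r → σ (ball p r) ≤ A * ENNReal.ofReal r ^ n)
    (hρ : 0 < ρ) (hcR : closedBall c (3 * ρ) ⊆ R) (hg : Measurable g) :
    ∫⁻ x, ∑' k, (ENNReal.ofReal (dyadicScale k) ^ n)⁻¹ *
        ∫⁻ y in homothety x (dyadicScale k) '' ball c ρ, g y ∂μ ∂σ ≤
      A * ENNReal.ofReal (2 * ρ) ^ n * ∫⁻ y in R, g y ∂μ := by
  set L : ℕ → Set E := fun k => homotheticLayer (frontier R) (ball c ρ) (dyadicScale k)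
  have hscale_ne (k : ℕ) : dyadicScale k ≠ 0 := (dyadicScale_pos k).ne'
  have hscale_le (k : ℕ) : dyadicScale k ≤ 1 := by linarith [dyadicScale_le_half k]
  have hL_meas (k : ℕ) : MeasurableSet (L k) :=
    (isOpen_homotheticLayer isOpen_ball (hscale_ne k)).measurableSet
  have hL_disj : Pairwise (Function.onFun Disjoint L) := (pairwise_disjoint_on L).2 fun j k hjk =>
    disjoint_homotheticLayer hR hRc hρ hcR (dyadicScale_pos k) (dyadicScale_le_half_of_lt hjk)
      (hscale_le j)
  have hball : ball c ρ ⊆ R :=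
    (ball_subset_closedBall.trans (closedBall_subset_closedBall (by linarith))).trans hcR
  have hL_subset (k : ℕ) : L k ⊆ R :=
    homotheticLayer_subset hR hRc hball (dyadicScale_pos k) (hscale_le k)
  have hmeas (k : ℕ) : Measurable fun x =>
      ∫⁻ y in homothety x (dyadicScale k) '' ball c ρ, g y ∂μ :=
    measurable_setLIntegral_homothety isOpen_ball (hscale_ne k) hg
  calc _ = ∑' k, (ENNReal.ofReal (dyadicScale k) ^ n)⁻¹ *
        ∫⁻ x, ∫⁻ y in homothety x (dyadicScale k) '' ball c ρ, g y ∂μ ∂σ := by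
        rw [lintegral_tsum fun k => ((hmeas k).const_mul _).aemeasurable]
        simp only [lintegral_const_mul _ (hmeas _)]
    _ ≤ ∑' k, A * ENNReal.ofReal (2 * ρ) ^ n * ∫⁻ y in L k, g y ∂μ := by
        refine ENNReal.tsum_le_tsum fun k => ENNReal.inv_mul_le_iff ?_ ?_ |>.2 <|
          lintegral_setLIntegral_homothety_ball_le hσR hσ (dyadicScale_pos k)
            (dyadicScale_le_half k) hρ.le hg
        · exact pow_ne_zero n (ENNReal.ofReal_pos.2 (dyadicScale_pos k)).ne'
        · exact ENNReal.pow_ne_top ENNReal.ofReal_ne_top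
    _ = A * ENNReal.ofReal (2 * ρ) ^ n * ∫⁻ y in ⋃ k, L k, g y ∂μ := by
        rw [ENNReal.tsum_mul_left, lintegral_iUnion hL_meas hL_disj]
    _ ≤ A * ENNReal.ofReal (2 * ρ) ^ n * ∫⁻ y in R, g y ∂μ := by
        gcongr
        exact iUnion_subset hL_subset

end LayerIntegral

section Pointwise

open AffineMap

-- The kernel bound, the telescoping weight and the volumes of two consecutive copies combine to the
-- power `s⁻ⁿ`, which the upper `n`-regularity of the boundary measure compensates.
theorem weight_mul_scale_rpow {s D ε : ℝ} (hs : 0 < s) (hD : 0 ≤ D) (d n : ℕ) :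
    (s ^ (2 * ε))⁻¹ * (2 * s * D) ^ (2 * d - n + 2 * ε : ℝ) * (s ^ d)⁻¹ * ((s / 2) ^ d)⁻¹ =
      (2 * D) ^ (2 * d - n + 2 * ε : ℝ) * 2 ^ d * (s ^ n)⁻¹ := by
  have hsplit : s ^ (2 * d - n + 2 * ε : ℝ) = s ^ d * s ^ d * (s ^ n)⁻¹ * s ^ (2 * ε) := by
    rw [← Real.rpow_natCast s d, ← Real.rpow_natCast s n, ← Real.rpow_neg hs.le,
      ← Real.rpow_add hs, ← Real.rpow_add hs, ← Real.rpow_add hs]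
    ring_nf
  rw [mul_right_comm 2 s D, Real.mul_rpow (by positivity) hs.le, hsplit, div_pow]
  have : s ^ (2 * ε) ≠ 0 := (Real.rpow_pos_of_pos hs _).ne'
  field_simp

variable {E : Type*} [NormedAddCommGroup E] [MeasurableSpace E] {μ : Measure E} {v : E → ℝ}

theorem integrableOn_of_isBounded [ProperSpace E] [OpensMeasurableSpace E]
    [IsFiniteMeasureOnCompacts μ] {A : Set E} (hv : Continuous v) (hA : Bornology.IsBounded A) :
    IntegrableOn v A μ :=
  (hv.continuousOn.integrableOn_compact hA.isCompact_closure).mono_set subset_closure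

variable [NormedSpace ℝ E] [FiniteDimensional ℝ E] [BorelSpace E] [μ.IsAddHaarMeasure]
  {B R : Set E} {x : E} {s D q ε : ℝ}

theorem inv_measure_homothety_image (hs : 0 < s) : (μ (homothety x s '' B))⁻¹ =
    ENNReal.ofReal (s ^ Module.finrank ℝ E)⁻¹ * (μ B)⁻¹ := by
  rw [Measure.addHaar_image_homothety, abs_of_pos (by positivity), ENNReal.mul_inv,
    ENNReal.ofReal_inv_of_pos (by positivity)]
  · exact Or.inl (ENNReal.ofReal_pos.2 (by positivity)).ne'
  · exact Or.inl ENNReal.ofReal_ne_top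

theorem tendsto_setAverage_homothety (hB : IsOpen B) (hB_ne : B.Nonempty)
    (hD : ∀ b ∈ B, dist b x ≤ D) (hv : Continuous v) :
    Tendsto (fun k => ⨍ y in homothety x (dyadicScale k) '' B, v y ∂μ) atTop (𝓝 (v x)) := by
  have hsubset (k : ℕ) := homothety_image_subset_closedBall (dyadicScale_pos k).le hD
  have hbdd (k : ℕ) := (isBounded_closedBall (x := x)).subset (hsubset k)
  have hopen (k : ℕ) := homothety_isOpenMap x _ (dyadicScale_pos k).ne' B hB
  refine tendsto_setAverage_of_continuousAt ?_ (fun k => (hopen k).measurableSet)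
    (fun k => ((hopen k).measure_pos μ (hB_ne.image _)).ne')
    (fun k => (hbdd k).measure_lt_top.ne) (fun k => integrableOn_of_isBounded hv (hbdd k))
    hv.continuousAt
  refine (nhds_basis_closedBall.smallSets.tendsto_right_iff).2 fun r hr => ?_
  have hradius : Tendsto (fun k => dyadicScale k * D) atTop (𝓝 0) := by
    simpa only [zero_mul] using tendsto_dyadicScale.mul_const D
  filter_upwards [hradius.eventually_le_const hr] with k hk
  exact (hsubset k).trans (closedBall_subset_closedBall hk)

theorem ofReal_sq_setAverage_homothety_sub_le (hB : IsOpen B) (hB_ne : B.Nonempty)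
    (hD : ∀ b ∈ B, dist b x ≤ D) (hv : Continuous v) (hs : 0 < s) (hq : 0 ≤ q)
    (hR : homothety x (s / 2) '' B ⊆ R) :
    ENNReal.ofReal ((⨍ y in homothety x s '' B, v y ∂μ -
        ⨍ z in homothety x (s / 2) '' B, v z ∂μ) ^ 2) ≤
      ENNReal.ofReal ((2 * s * D) ^ q) * ((μ (homothety x s '' B))⁻¹ *
        ((μ (homothety x (s / 2) '' B))⁻¹ *
          ∫⁻ y in homothety x s '' B, ∫⁻ z in R, gagliardoKernel q v y z ∂μ ∂μ)) := by
  have hD0 : 0 ≤ D := hB_ne.elim fun b hb => dist_nonneg.trans (hD b hb)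
  have hs2 : 0 < s / 2 := half_pos hs
  have hsubset {r : ℝ} (hr : 0 < r) := homothety_image_subset_closedBall hr.le hD
  have hbdd {r : ℝ} (hr : 0 < r) := (isBounded_closedBall (x := x)).subset (hsubset hr)
  have hopen {r : ℝ} (hr : 0 < r) := homothety_isOpenMap x r hr.ne' B hB
  have hpos {r : ℝ} (hr : 0 < r) := ((hopen hr).measure_pos μ (hB_ne.image _)).ne'
  have hfin {r : ℝ} (hr : 0 < r) := (hbdd hr).measure_lt_top (μ := μ) |>.ne
  have hdist : ∀ y ∈ homothety x s '' B, ∀ z ∈ homothety x (s / 2) '' B,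
      dist y z ≤ 2 * s * D := fun y hy z hz => by
    have hy' : dist y x ≤ s * D := hsubset hs hy
    have hz' : dist z x ≤ s / 2 * D := hsubset hs2 hz
    nlinarith [dist_triangle_right y z x]
  refine (ofReal_sq_setAverage_sub_le hq (hopen hs).measurableSet (hopen hs2).measurableSet
    (hpos hs) (hfin hs) (hpos hs2) (hfin hs2) (integrableOn_of_isBounded hv (hbdd hs))
    (integrableOn_of_isBounded hv (hbdd hs2)) hdist).trans ?_
  simp only [setLAverage_eq, ENNReal.div_eq_inv_mul]
  rw [lintegral_const_mul' _ _ (ENNReal.inv_ne_top.2 (hpos hs2))]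
  gcongr

theorem ofReal_weighted_sq_setAverage_homothety_sub_le {n : ℕ} (hn : n ≤ Module.finrank ℝ E)
    (hε : 0 < ε) (hB : IsOpen B) (hB_ne : B.Nonempty)
    (hD : ∀ b ∈ B, dist b x ≤ D) (hv : Continuous v) (hs : 0 < s)
    (hR : homothety x (s / 2) '' B ⊆ R) (hq : q = 2 * Module.finrank ℝ E - n + 2 * ε) :
    ENNReal.ofReal ((s ^ (2 * ε))⁻¹ * (⨍ y in homothety x s '' B, v y ∂μ -
        ⨍ z in homothety x (s / 2) '' B, v z ∂μ) ^ 2) ≤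
      ENNReal.ofReal ((2 * D) ^ q * 2 ^ Module.finrank ℝ E) * (μ B)⁻¹ ^ 2 *
        ((ENNReal.ofReal s ^ n)⁻¹ *
          ∫⁻ y in homothety x s '' B, ∫⁻ z in R, gagliardoKernel q v y z ∂μ ∂μ) := by
  have hD0 : 0 ≤ D := hB_ne.elim fun b hb => dist_nonneg.trans (hD b hb)
  have hq0 : 0 ≤ q := by
    have : (n : ℝ) ≤ Module.finrank ℝ E := by exact_mod_cast hn
    linarith
  rw [ENNReal.ofReal_mul (by positivity)]
  have hconst : ENNReal.ofReal (s ^ (2 * ε))⁻¹ * ENNReal.ofReal ((2 * s * D) ^ q) *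
      ENNReal.ofReal (s ^ Module.finrank ℝ E)⁻¹ * ENNReal.ofReal ((s / 2) ^ Module.finrank ℝ E)⁻¹ =
      ENNReal.ofReal ((2 * D) ^ q * 2 ^ Module.finrank ℝ E) * (ENNReal.ofReal s ^ n)⁻¹ := by
    rw [← ENNReal.ofReal_pow hs.le, ← ENNReal.ofReal_inv_of_pos (by positivity),
      ← ENNReal.ofReal_mul (by positivity), ← ENNReal.ofReal_mul (by positivity),
      ← ENNReal.ofReal_mul (by positivity), ← ENNReal.ofReal_mul (by positivity), hq,
      weight_mul_scale_rpow hs hD0]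
  set I := ∫⁻ y in homothety x s '' B, ∫⁻ z in R, gagliardoKernel q v y z ∂μ ∂μ
  calc ENNReal.ofReal (s ^ (2 * ε))⁻¹ * ENNReal.ofReal ((⨍ y in homothety x s '' B, v y ∂μ -
          ⨍ z in homothety x (s / 2) '' B, v z ∂μ) ^ 2)
      ≤ ENNReal.ofReal (s ^ (2 * ε))⁻¹ * (ENNReal.ofReal ((2 * s * D) ^ q) *
          ((μ (homothety x s '' B))⁻¹ * ((μ (homothety x (s / 2) '' B))⁻¹ * I))) := by
        gcongr
        exact ofReal_sq_setAverage_homothety_sub_le hB hB_ne hD hv hs hq0 hR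
    _ = ENNReal.ofReal (s ^ (2 * ε))⁻¹ * ENNReal.ofReal ((2 * s * D) ^ q) *
          ENNReal.ofReal (s ^ Module.finrank ℝ E)⁻¹ *
          ENNReal.ofReal ((s / 2) ^ Module.finrank ℝ E)⁻¹ * ((μ B)⁻¹ ^ 2 * I) := by
        rw [inv_measure_homothety_image hs, inv_measure_homothety_image (half_pos hs)]
        ring
    _ = _ := by
        rw [hconst]
        ring

theorem ofReal_sq_le_add_tsum_homothety {n : ℕ} (hn : n ≤ Module.finrank ℝ E) (hε : 0 < ε)
    (hq : q = 2 * Module.finrank ℝ E - n + 2 * ε) (hR : IsOpen R) (hRc : Convex ℝ R)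
    (hx : x ∈ closure R) (hB : IsOpen B) (hB_ne : B.Nonempty) (hBR : B ⊆ R)
    (hD : ∀ b ∈ B, dist b x ≤ D) (hv : Continuous v) :
    ENNReal.ofReal (v x ^ 2) ≤
      2 * (ENNReal.ofReal (dyadicScale 0 ^ Module.finrank ℝ E)⁻¹ * (μ B)⁻¹) *
          ∫⁻ y in R, ENNReal.ofReal (v y ^ 2) ∂μ +
        2 * ENNReal.ofReal (1 / ε) *
          (ENNReal.ofReal ((2 * D) ^ q * 2 ^ Module.finrank ℝ E) * (μ B)⁻¹ ^ 2 *
            ∑' k, (ENNReal.ofReal (dyadicScale k) ^ n)⁻¹ *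
              ∫⁻ y in homothety x (dyadicScale k) '' B, ∫⁻ z in R,
                gagliardoKernel q v y z ∂μ ∂μ) := by
  have hcopy (k : ℕ) : homothety x (dyadicScale k) '' B ⊆ R :=
    homothety_image_subset_of_convex hR hRc hx hBR (dyadicScale_pos k)
      (by linarith [dyadicScale_le_half k])
  have : IsFiniteMeasure (μ.restrict (homothety x (dyadicScale 0) '' B)) :=
    isFiniteMeasure_restrict.2 ((isBounded_closedBall.subset
      (homothety_image_subset_closedBall (dyadicScale_pos 0).le hD)).measure_lt_top.ne)
  have hcoarse : ENNReal.ofReal ((⨍ y in homothety x (dyadicScale 0) '' B, v y ∂μ) ^ 2) ≤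
      ENNReal.ofReal (dyadicScale 0 ^ Module.finrank ℝ E)⁻¹ * (μ B)⁻¹ *
        ∫⁻ y in R, ENNReal.ofReal (v y ^ 2) ∂μ := by
    rw [← inv_measure_homothety_image (x := x) (dyadicScale_pos 0)]
    refine (ofReal_sq_average_le hv.aestronglyMeasurable).trans ?_
    rw [setLAverage_eq, ENNReal.div_eq_inv_mul]
    gcongr
    exact hcopy 0
  refine (ofReal_sq_le_of_tendsto (tendsto_setAverage_homothety (μ := μ) hB hB_ne hD hv)
    (fun k => Real.rpow_pos_of_pos (dyadicScale_pos k) (2 * ε))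
    (sum_dyadicScale_rpow_le hε)).trans ?_
  rw [mul_assoc 2 (_ * _) (∫⁻ _ in R, _ ∂μ),
    ← ENNReal.tsum_mul_left (a := ENNReal.ofReal ((2 * D) ^ q * _) * _)]
  gcongr with k
  rw [dyadicScale_succ]
  exact ofReal_weighted_sq_setAverage_homothety_sub_le hn hε hB hB_ne hD hv (dyadicScale_pos k)
    (dyadicScale_succ k ▸ hcopy (k + 1)) hq

end Pointwise

section Trace

theorem rpow_le_pow_two_mul_add_one {b ε : ℝ} (hb : 1 ≤ b) (hε : ε ≤ 1 / 2) (d n : ℕ) :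
    b ^ (2 * d - n + 2 * ε : ℝ) ≤ b ^ (2 * d + 1) := by
  rw [← Real.rpow_natCast]
  refine Real.rpow_le_rpow_of_exponent_le hb ?_
  push_cast
  linarith [n.cast_nonneg (α := ℝ)]

variable {E : Type*} [NormedAddCommGroup E] [InnerProductSpace ℝ E] [FiniteDimensional ℝ E]
  [MeasurableSpace E] [BorelSpace E] {μ σ : Measure E} [μ.IsAddHaarMeasure] [SFinite σ]
  {R : Set E} {A : ℝ≥0} {n : ℕ}

theorem lintegral_sq_le_of_closedBall_subset (hn : n ≤ Module.finrank ℝ E) (hR : IsOpen R)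
    (hRc : Convex ℝ R) (hσR : ∀ᵐ x ∂σ, x ∈ frontier R)
    (hσ : ∀ p r, 0 ≤ r → σ (ball p r) ≤ A * ENNReal.ofReal r ^ n) {c : E} {ρ D ε q : ℝ}
    (hρ : 0 < ρ) (hcR : closedBall c (3 * ρ) ⊆ R) (hD : ∀ b ∈ R, ∀ x ∈ closure R, dist b x ≤ D)
    (hε : 0 < ε) (hq : q = 2 * Module.finrank ℝ E - n + 2 * ε) {v : E → ℝ} (hv : Continuous v) :
    ∫⁻ x, ENNReal.ofReal (v x ^ 2) ∂σ ≤
      2 * (ENNReal.ofReal (dyadicScale 0 ^ Module.finrank ℝ E)⁻¹ * (μ (ball c ρ))⁻¹) *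
          (∫⁻ y in R, ENNReal.ofReal (v y ^ 2) ∂μ) * σ univ +
        2 * ENNReal.ofReal (1 / ε) *
          (ENNReal.ofReal ((2 * D) ^ q * 2 ^ Module.finrank ℝ E) * (μ (ball c ρ))⁻¹ ^ 2 *
            (A * ENNReal.ofReal (2 * ρ) ^ n *
              ∫⁻ y in R, ∫⁻ z in R, gagliardoKernel q v y z ∂μ ∂μ)) := by
  have hball : ball c ρ ⊆ R :=
    (ball_subset_closedBall.trans (closedBall_subset_closedBall (by linarith))).trans hcR
  have hinv : (μ (ball c ρ))⁻¹ ≠ ∞ := ENNReal.inv_ne_top.2 (measure_ball_pos μ c hρ).ne'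
  have hkernel : Measurable fun y => ∫⁻ z in R, gagliardoKernel q v y z ∂μ :=
    (measurable_gagliardoKernel hv.measurable).lintegral_prod_right'
  refine (lintegral_mono_ae (hσR.mono fun x hx => ofReal_sq_le_add_tsum_homothety (μ := μ) hn hε hq
    hR hRc (frontier_subset_closure hx) isOpen_ball (nonempty_ball.2 hρ) hball
    (fun b hb => hD b (hball hb) x (frontier_subset_closure hx)) hv)).trans ?_
  rw [lintegral_add_left measurable_const, lintegral_const,
    lintegral_const_mul' _ _ (by finiteness), lintegral_const_mul' _ _ (by finiteness)]
  gcongr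
  exact lintegral_tsum_homothety_ball_le hR hRc hσR hσ hρ hcR hkernel

theorem exists_lintegral_sq_le_gagliardo [IsFiniteMeasure σ] (hn : n ≤ Module.finrank ℝ E)
    (hR : IsOpen R) (hRc : Convex ℝ R) (hR_ne : R.Nonempty) (hRb : Bornology.IsBounded R)
    (hσR : ∀ᵐ x ∂σ, x ∈ frontier R)
    (hσ : ∀ p r, 0 ≤ r → σ (ball p r) ≤ A * ENNReal.ofReal r ^ n) :
    ∃ K : ℝ≥0, ∀ ε ∈ Ioo (0 : ℝ) (1 / 2), ∀ v : E → ℝ, Continuous v →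
      ∫⁻ x, ENNReal.ofReal (v x ^ 2) ∂σ ≤ K * ENNReal.ofReal (1 / ε) *
        (∫⁻ x in R, ENNReal.ofReal (v x ^ 2) ∂μ + ∫⁻ x in R, ∫⁻ y in R,
          gagliardoKernel (2 * Module.finrank ℝ E - n + 2 * ε) v x y ∂μ ∂μ) := by
  set d := Module.finrank ℝ E
  obtain ⟨c, hc⟩ := hR_ne
  obtain ⟨r, hr, hcr⟩ := nhds_basis_closedBall.mem_iff.1 (hR.mem_nhds hc)
  obtain ⟨ρ, rfl⟩ : ∃ ρ, 3 * ρ = r := ⟨r / 3, by ring⟩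
  have hρ : 0 < ρ := pos_of_mul_pos_right hr three_pos.le
  obtain ⟨D, hD⟩ := isBounded_iff.1 hRb.closure
  have hinv : (μ (ball c ρ))⁻¹ ≠ ∞ := ENNReal.inv_ne_top.2 (measure_ball_pos μ c hρ).ne'
  set K₁ : ℝ≥0∞ := 2 * (ENNReal.ofReal (dyadicScale 0 ^ d)⁻¹ * (μ (ball c ρ))⁻¹) * σ univ
  set K₂ : ℝ≥0∞ := 2 * (ENNReal.ofReal ((2 * max D 1) ^ (2 * d + 1) * 2 ^ d) *
    (μ (ball c ρ))⁻¹ ^ 2 * (A * ENNReal.ofReal (2 * ρ) ^ n))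
  refine ⟨(K₁ + K₂).toNNReal, fun ε hε v hv => ?_⟩
  rw [ENNReal.coe_toNNReal (by finiteness)]
  set q : ℝ := 2 * d - n + 2 * ε
  set I := ∫⁻ x in R, ENNReal.ofReal (v x ^ 2) ∂μ
  set J := ∫⁻ x in R, ∫⁻ y in R, gagliardoKernel q v x y ∂μ ∂μ
  have hε1 : 1 ≤ ENNReal.ofReal (1 / ε) :=
    ENNReal.one_le_ofReal.2 ((one_le_div hε.1).2 (by linarith [hε.2]))
  calc ∫⁻ x, ENNReal.ofReal (v x ^ 2) ∂σ
      ≤ 2 * (ENNReal.ofReal (dyadicScale 0 ^ d)⁻¹ * (μ (ball c ρ))⁻¹) * I * σ univ +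
        2 * ENNReal.ofReal (1 / ε) * (ENNReal.ofReal ((2 * max D 1) ^ (2 * d + 1) * 2 ^ d) *
          (μ (ball c ρ))⁻¹ ^ 2 * (A * ENNReal.ofReal (2 * ρ) ^ n * J)) := by
        refine (lintegral_sq_le_of_closedBall_subset (μ := μ) hn hR hRc hσR hσ hρ hcr
          (fun b hb x hx => (hD (subset_closure hb) hx).trans (le_max_left D 1)) hε.1 rfl
          hv).trans ?_
        gcongr
        exact rpow_le_pow_two_mul_add_one (by linarith [le_max_right D 1]) hε.2.le d n
    _ = K₁ * 1 * I + K₂ * ENNReal.ofReal (1 / ε) * J := by ring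
    _ ≤ (K₁ + K₂) * ENNReal.ofReal (1 / ε) * I + (K₁ + K₂) * ENNReal.ofReal (1 / ε) * J := by
        gcongr
        · exact le_self_add
        · exact le_add_self
    _ = _ := (mul_add _ _ _).symm

end Trace

theorem stmt9_general {n : ℕ} (R : Set (EuclideanSpace ℝ (Fin (n + 1)))) (hR_ne : R.Nonempty)
    (hR_open : IsOpen R) (hR_conv : Convex ℝ R) (hR_bdd : Bornology.IsBounded R) :
    ∃ C : ℝ, 0 < C ∧ ∀ ε : ℝ, ε ∈ Set.Ioo (0 : ℝ) (1 / 2) →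
      ∀ v : EuclideanSpace ℝ (Fin (n + 1)) → ℝ, Continuous v →
        (∫⁻ x in frontier R, ENNReal.ofReal ((v x) ^ 2) ∂(μH[n])) ≤
          ENNReal.ofReal (C ^ 2 / ε) *
            ((∫⁻ x in R, ENNReal.ofReal ((v x) ^ 2)) +
              ∫⁻ x in R, ∫⁻ y in R,
                ENNReal.ofReal (|v x - v y| ^ 2 / ‖x - y‖ ^ ((n + 2 : ℝ) + 2 * ε))) := by
  obtain ⟨A, hA⟩ := exists_hausdorffMeasure_frontier_inter_ball_le n
  have : IsFiniteMeasure ((μH[n] : Measure (EuclideanSpace ℝ (Fin (n + 1)))).restrict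
    (frontier R)) := isFiniteMeasure_restrict.2
      (hausdorffMeasure_frontier_lt_top hR_open hR_conv hR_bdd).ne
  have hregular (p : EuclideanSpace ℝ (Fin (n + 1))) (r : ℝ) (hr : 0 ≤ r) :
      μH[n].restrict (frontier R) (ball p r) ≤ A * ENNReal.ofReal r ^ n := by
    rw [Measure.restrict_apply measurableSet_ball, inter_comm]
    exact hA R hR_open hR_conv p r hr
  obtain ⟨K, hK⟩ := exists_lintegral_sq_le_gagliardo (μ := volume) (by simp) hR_open hR_conv hR_ne
    hR_bdd (ae_restrict_mem isClosed_frontier.measurableSet) hregular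
  refine ⟨√(K + 1), by positivity, fun ε hε v hv => (hK ε hε v hv).trans ?_⟩
  have hexponent : (2 * (Module.finrank ℝ (EuclideanSpace ℝ (Fin (n + 1))) : ℝ) - n + 2 * ε) =
      n + 2 + 2 * ε := by
    rw [finrank_euclideanSpace_fin]
    push_cast
    ring
  rw [hexponent, Real.sq_sqrt (by positivity), div_eq_mul_one_div (_ + 1),
    ENNReal.ofReal_mul (by positivity), ← ENNReal.ofReal_coe_nnreal]
  unfold gagliardoKernel
  gcongr
  exact le_add_of_nonneg_right zero_le_one

/-- Trace inequality (Lemma 3.7 of the paper): for a nonempty bounded open convex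
set `R ⊂ ℝ²` there is a constant `C > 0` such that for all `ε ∈ (0, 1/2)` and all
continuous `v : ℝ² → ℝ`,
`∫_{∂R} v² dH¹ ≤ C² ε⁻¹ (∫_R v² dx + ∫_R ∫_R |v x − v y|² / |x − y|^{3+2ε} dx dy)`,
understood as an inequality in `[0, ∞]`. -/
theorem stmt9 (R : Set (EuclideanSpace ℝ (Fin 2)))
    (hR_ne : R.Nonempty) (hR_open : IsOpen R) (hR_conv : Convex ℝ R)
    (hR_bdd : Bornology.IsBounded R) :
    ∃ C : ℝ, 0 < C ∧ ∀ ε : ℝ, ε ∈ Set.Ioo (0 : ℝ) (1 / 2) →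
      ∀ v : EuclideanSpace ℝ (Fin 2) → ℝ, Continuous v →
        (∫⁻ x in frontier R, ENNReal.ofReal ((v x) ^ 2) ∂(μH[1])) ≤
          ENNReal.ofReal (C ^ 2 / ε) *
            ((∫⁻ x in R, ENNReal.ofReal ((v x) ^ 2)) +
              ∫⁻ x in R, ∫⁻ y in R,
                ENNReal.ofReal (|v x - v y| ^ 2 / ‖x - y‖ ^ ((3 : ℝ) + 2 * ε))) := by
  simpa only [Nat.cast_one, show (1 + 2 : ℝ) = 3 by norm_num] using
    stmt9_general (n := 1) R hR_ne hR_open hR_conv hR_bdd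
end
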